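/- (Optimal potential for the first eigenvalue) Let 1 < p < ∞, q = p/(p−1), and let u₀ be a minimizer of J over U = (𝓗₀¹(Ω) ∩ L^{2q}(Ω)) ∖ {0}, chosen nonnegative. Define V₀ = M ‖u₀²‖_{L^q(Ω)}^{1−q} |u₀|^{2(q−1)}. Then: V₀ ∈ S_p with ‖V₀‖_{L^p(Ω)} = M; u₀ is a first eigenfunction of the potential V₀, i.e. a₁(u₀, w) + ∫_Ω V₀ u₀ w dxdy = λ₁(V₀) ∫_Ω u₀ w dxdy for all w ∈ 𝓗₀¹(Ω) ∩ L^{2q}(Ω); λ₁(V₀) = J(u₀) = sup{ λ₁(V) : V ∈ S_p }; and V₀ is the unique maximizer, i.e. any V ∈ S_p with λ₁(V) = sup_{W ∈ S_p} λ₁(W) equals V₀ almost everywhere. -/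

import Mathlib

open MeasureTheory Set Filter

noncomputable section

/-- The open unit square `Ω = (0,1) × (0,1)` in `ℝ²`. -/
def Omega : Set (ℝ × ℝ) := Ioo (0:ℝ) 1 ×ˢ Ioo (0:ℝ) 1

/-- Test functions on a set `s`: smooth with compact support contained in `s`. -/
def IsTestOn (s : Set (ℝ × ℝ)) (φ : ℝ × ℝ → ℝ) : Prop :=
  ContDiff ℝ (⊤ : ℕ∞) φ ∧ HasCompactSupport φ ∧ tsupport φ ⊆ s

/-- Classical partial derivative in the `x`-direction. -/
def pdx (φ : ℝ × ℝ → ℝ) (p : ℝ × ℝ) : ℝ := fderiv ℝ φ p (1, 0)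

/-- Classical partial derivative in the `y`-direction. -/
def pdy (φ : ℝ × ℝ → ℝ) (p : ℝ × ℝ) : ℝ := fderiv ℝ φ p (0, 1)

/-- `g` is a weak `x`-partial derivative of `u` on `s`. -/
def HasWeakDerivXOn (s : Set (ℝ × ℝ)) (u g : ℝ × ℝ → ℝ) : Prop :=
  LocallyIntegrableOn u s volume ∧ LocallyIntegrableOn g s volume ∧
  ∀ φ : ℝ × ℝ → ℝ, IsTestOn s φ →
    ∫ p in s, u p * pdx φ p = - ∫ p in s, g p * φ p

/-- `g` is a weak `y`-partial derivative of `u` on `s`. -/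
def HasWeakDerivYOn (s : Set (ℝ × ℝ)) (u g : ℝ × ℝ → ℝ) : Prop :=
  LocallyIntegrableOn u s volume ∧ LocallyIntegrableOn g s volume ∧
  ∀ φ : ℝ × ℝ → ℝ, IsTestOn s φ →
    ∫ p in s, u p * pdy φ p = - ∫ p in s, g p * φ p

/-- Test functions on `Ω`. -/
def IsTest (φ : ℝ × ℝ → ℝ) : Prop := IsTestOn Omega φ

/-- Membership in the weighted Sobolev space `𝓗¹(Ω)`, with weak derivatives `gx, gy`:
`u ∈ L²(Ω)`, `gx = ∂ₓu`, `gy = ∂_y u` weakly, and `y^α₁ gx, x^α₂ gy ∈ L²(Ω)`. -/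
structure MemH1 (α₁ α₂ : ℝ) (u gx gy : ℝ × ℝ → ℝ) : Prop where
  memL2 : MemLp u 2 (volume.restrict Omega)
  weakX : HasWeakDerivXOn Omega u gx
  weakY : HasWeakDerivYOn Omega u gy
  wgx : MemLp (fun p => p.2 ^ α₁ * gx p) 2 (volume.restrict Omega)
  wgy : MemLp (fun p => p.1 ^ α₂ * gy p) 2 (volume.restrict Omega)

/-- The `𝓗¹(Ω)` norm of `u` (with weak derivatives `gx, gy`). -/
def H1Norm (α₁ α₂ : ℝ) (u gx gy : ℝ × ℝ → ℝ) : ℝ :=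
  Real.sqrt ((∫ p in Omega, (u p) ^ 2) +
    (∫ p in Omega, (p.2 ^ α₁ * gx p) ^ 2) +
    (∫ p in Omega, (p.1 ^ α₂ * gy p) ^ 2))

/-- Membership in `𝓗₀¹(Ω)`: member of `𝓗¹(Ω)` approximable in the `𝓗¹` norm by
test functions. -/
def MemH10 (α₁ α₂ : ℝ) (u gx gy : ℝ × ℝ → ℝ) : Prop :=
  MemH1 α₁ α₂ u gx gy ∧
  ∀ ε : ℝ, 0 < ε → ∃ φ : ℝ × ℝ → ℝ, IsTest φ ∧
    H1Norm α₁ α₂ (fun p => u p - φ p) (fun p => gx p - pdx φ p)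
      (fun p => gy p - pdy φ p) < ε

/-- Membership in `H₀(Ω) = {u ∈ 𝓗₀¹(Ω) : ∫_Ω V u² < ∞}`. -/
def MemH0 (α₁ α₂ : ℝ) (V u gx gy : ℝ × ℝ → ℝ) : Prop :=
  MemH10 α₁ α₂ u gx gy ∧
  IntegrableOn (fun p => V p * (u p) ^ 2) Omega volume

/-- The bilinear form `a(u,v)` associated with the sub-elliptic operator with potential `V`. -/
def aForm (α₁ α₂ : ℝ) (V u gx gy v hx hy : ℝ × ℝ → ℝ) : ℝ :=
  ∫ p in Omega, ((p.2 ^ α₁ * gx p) * (p.2 ^ α₁ * hx p) +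
    (p.1 ^ α₂ * gy p) * (p.1 ^ α₂ * hy p) + V p * u p * v p)

/-- The bilinear form `a₁(u,v)` (no potential). -/
def a1Form (α₁ α₂ : ℝ) (u gx gy v hx hy : ℝ × ℝ → ℝ) : ℝ :=
  ∫ p in Omega, ((p.2 ^ α₁ * gx p) * (p.2 ^ α₁ * hx p) +
    (p.1 ^ α₂ * gy p) * (p.1 ^ α₂ * hy p))

/-- Membership in `S_p = {V ∈ L^p(Ω) : V ≥ 0 a.e., ‖V‖_{L^p(Ω)} ≤ M}`. -/
def MemSp (ppow M : ℝ) (V : ℝ × ℝ → ℝ) : Prop :=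
  MemLp V (ENNReal.ofReal ppow) (volume.restrict Omega) ∧
  (∀ᵐ p ∂(volume.restrict Omega), 0 ≤ V p) ∧
  eLpNorm V (ENNReal.ofReal ppow) (volume.restrict Omega) ≤ ENNReal.ofReal M

/-- `u` (with weak derivatives `gx, gy`) is an eigenfunction of the sub-elliptic operator
with potential `V` for the eigenvalue `lam`. -/
def IsEigenfun (α₁ α₂ : ℝ) (V : ℝ × ℝ → ℝ) (lam : ℝ) (u gx gy : ℝ × ℝ → ℝ) : Prop :=
  MemH0 α₁ α₂ V u gx gy ∧
  ∀ v hx hy : ℝ × ℝ → ℝ, MemH0 α₁ α₂ V v hx hy →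
    aForm α₁ α₂ V u gx gy v hx hy = lam * ∫ p in Omega, u p * v p

/-- The first eigenvalue `λ₁(V) = inf { a(u,u) : u ∈ H₀(Ω), ‖u‖_{L²} = 1 }`. -/
def lam1 (α₁ α₂ : ℝ) (V : ℝ × ℝ → ℝ) : ℝ :=
  sInf { r | ∃ u gx gy : ℝ × ℝ → ℝ, MemH0 α₁ α₂ V u gx gy ∧
    (∫ p in Omega, (u p) ^ 2) = 1 ∧ r = aForm α₁ α₂ V u gx gy u gx gy }

/-- `sup { a(u,u) : u ∈ span(φ), ‖u‖_{L²(Ω)} = 1 }` for a finite family `φ` with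
weak derivatives `φx, φy`. -/
def rayleighSup (α₁ α₂ : ℝ) (V : ℝ × ℝ → ℝ) {k : ℕ} (φ φx φy : Fin k → ℝ × ℝ → ℝ) : ℝ :=
  sSup { s | ∃ c : Fin k → ℝ,
    (∫ p in Omega, (∑ i, c i * φ i p) ^ 2) = 1 ∧
    s = aForm α₁ α₂ V (fun p => ∑ i, c i * φ i p) (fun p => ∑ i, c i * φx i p)
      (fun p => ∑ i, c i * φy i p) (fun p => ∑ i, c i * φ i p)
      (fun p => ∑ i, c i * φx i p) (fun p => ∑ i, c i * φy i p) }

/-- The set of values `sup { a(u,u) : u ∈ E, ‖u‖ = 1 }` over `k`-dimensional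
subspaces `E` of `H₀(Ω)` (represented by `L²(Ω)`-linearly independent families of
`k` elements of `H₀(Ω)`). -/
def minmaxSet (α₁ α₂ : ℝ) (V : ℝ × ℝ → ℝ) (k : ℕ) : Set ℝ :=
  { r | ∃ φ φx φy : Fin k → ℝ × ℝ → ℝ,
      (∀ i, MemH0 α₁ α₂ V (φ i) (φx i) (φy i)) ∧
      (∀ c : Fin k → ℝ, (∀ᵐ p ∂(volume.restrict Omega), ∑ i, c i * φ i p = 0) → c = 0) ∧
      r = rayleighSup α₁ α₂ V φ φx φy }

/-- The `k`-th eigenvalue via the min-max principle. -/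
def lamk (α₁ α₂ : ℝ) (V : ℝ × ℝ → ℝ) (k : ℕ) : ℝ := sInf (minmaxSet α₁ α₂ V k)

/-- Membership in `U = (𝓗₀¹(Ω) ∩ L^{2q}(Ω)) \ {0}`. -/
def MemU (α₁ α₂ qe : ℝ) (u gx gy : ℝ × ℝ → ℝ) : Prop :=
  MemH10 α₁ α₂ u gx gy ∧
  MemLp u (ENNReal.ofReal (2 * qe)) (volume.restrict Omega) ∧
  ¬ (∀ᵐ p ∂(volume.restrict Omega), u p = 0)

/-- The functional `J(u) = (a₁(u,u) + M ‖u‖_{L^{2q}(Ω)}²) / ‖u‖_{L²(Ω)}²`. -/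
def Jfun (α₁ α₂ M qe : ℝ) (u gx gy : ℝ × ℝ → ℝ) : ℝ :=
  (a1Form α₁ α₂ u gx gy u gx gy +
    M * (∫ p in Omega, |u p| ^ (2 * qe)) ^ (1 / qe)) / (∫ p in Omega, (u p) ^ 2)

/-!
The energy `E(u) = a₁(u,u)` satisfies `E(√(f² + g²)) ≤ E(f) + E(g)`, that is, `ρ ↦ E(√ρ)` is
convex. With `c = J(u₀)`, the function `u₀²` therefore minimizes the convex functional
`ρ ↦ E(√ρ) + M ‖ρ‖_q - c ∫ ρ` over `ρ ≥ 0`. As `V₀` is the `L^p` function of norm `M` norming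
`u₀²`, it is the derivative of `M ‖·‖_q` at `u₀²`, and the first-order condition in the direction
`w²` reads `c ∫ w² ≤ E(w) + ∫ V₀ w²`, with equality at `w = u₀`: hence `λ₁(V₀) = c`, with
eigenfunction `u₀`. Conversely, testing `λ₁(V)` with `u₀` and applying Hölder's inequality gives
`λ₁(V) ≤ c` for `V ∈ S_p`, and the equality case of Hölder's inequality forces `V = V₀`.
-/

lemma abs_rpow_two_mul (x q : ℝ) : |x| ^ (2 * q) = (x ^ 2) ^ q := by
  rw [Real.rpow_mul (abs_nonneg x), Real.rpow_two, sq_abs]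

lemma rpow_sub_one_mul_self {x q : ℝ} (hx : 0 ≤ x) (hq : 0 < q) : x ^ (q - 1) * x = x ^ q := by
  rw [← Real.rpow_add_one' hx (by simpa using hq.ne'), sub_add_cancel]

lemma eq_rpow_sub_one_of_mul_eq_young {a b p q : ℝ} (ha : 0 ≤ a) (hb : 0 ≤ b)
    (hpq : p.HolderConjugate q) (h : a * b = a ^ p / p + b ^ q / q) : a = b ^ (q - 1) := by
  have powers_eq : a ^ p = b ^ q :=
    (Real.geom_mean_eq_arith_mean2_weighted_iff_of_pos hpq.inv_pos hpq.symm.inv_pos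
      (Real.rpow_nonneg ha p) (Real.rpow_nonneg hb q) hpq.inv_add_inv_eq_one).mp
      (by rw [Real.rpow_rpow_inv ha hpq.ne_zero, Real.rpow_rpow_inv hb hpq.symm.ne_zero, h]; ring)
  have exponent_eq : q * p⁻¹ = q - 1 := by
    rw [← div_eq_mul_inv, div_eq_iff hpq.ne_zero, hpq.symm.sub_one_mul_conj]
  rw [← Real.rpow_rpow_inv ha hpq.ne_zero, powers_eq, ← Real.rpow_mul hb, exponent_eq]

section Duality

variable {α : Type*} [MeasurableSpace α] {μ : Measure α} {p q M : ℝ} {V ρ σ : α → ℝ}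

lemma integrable_rpow_of_memLp (hq : 0 < q) (hρ : 0 ≤ᵐ[μ] ρ) (h : MemLp ρ (ENNReal.ofReal q) μ) :
    Integrable (fun x => ρ x ^ q) μ := by
  have norm_pow := h.integrable_norm_rpow (by simpa using hq) ENNReal.ofReal_ne_top
  rw [ENNReal.toReal_ofReal hq.le] at norm_pow
  refine norm_pow.congr ?_
  filter_upwards [hρ] with x hx using by rw [Real.norm_of_nonneg hx]

lemma eLpNorm_ofReal_of_nonneg (hp : 0 < p) (hV : 0 ≤ᵐ[μ] V) (h : MemLp V (ENNReal.ofReal p) μ) :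
    eLpNorm V (ENNReal.ofReal p) μ = ENNReal.ofReal ((∫ x, V x ^ p ∂μ) ^ p⁻¹) := by
  rw [h.eLpNorm_eq_integral_rpow_norm (by simpa using hp) ENNReal.ofReal_ne_top,
    ENNReal.toReal_ofReal hp.le, integral_congr_ae (g := fun x => V x ^ p)]
  filter_upwards [hV] with x hx using by rw [Real.norm_of_nonneg hx]

lemma integral_rpow_nonneg (hρ : 0 ≤ᵐ[μ] ρ) (q : ℝ) : 0 ≤ ∫ x, ρ x ^ q ∂μ :=
  integral_nonneg_of_ae (by filter_upwards [hρ] with x hx using Real.rpow_nonneg hx q)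

lemma integral_rpow_le_of_eLpNorm_le (hp : 0 < p) (hM : 0 ≤ M) (hV : 0 ≤ᵐ[μ] V)
    (h : MemLp V (ENNReal.ofReal p) μ) (hVM : eLpNorm V (ENNReal.ofReal p) μ ≤ ENNReal.ofReal M) :
    ∫ x, V x ^ p ∂μ ≤ M ^ p := by
  rwa [eLpNorm_ofReal_of_nonneg hp hV h, ENNReal.ofReal_le_ofReal_iff hM,
    Real.rpow_inv_le_iff_of_pos (integral_rpow_nonneg hV p) hM hp] at hVM

/-- The `L^q` norm of a nonnegative function as a real number, without the absolute value. -/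
def lqNorm (μ : Measure α) (q : ℝ) (ρ : α → ℝ) : ℝ := (∫ x, ρ x ^ q ∂μ) ^ (1 / q)

lemma lqNorm_nonneg (hρ : 0 ≤ᵐ[μ] ρ) : 0 ≤ lqNorm μ q ρ :=
  Real.rpow_nonneg (integral_rpow_nonneg hρ q) _

lemma lqNorm_rpow (hq : 0 < q) (hρ : 0 ≤ᵐ[μ] ρ) : lqNorm μ q ρ ^ q = ∫ x, ρ x ^ q ∂μ := by
  rw [lqNorm, one_div, Real.rpow_inv_rpow (integral_rpow_nonneg hρ q) hq.ne']

lemma integral_pos_of_not_ae_eq_zero (hρ0 : 0 ≤ᵐ[μ] ρ) (hρ : Integrable ρ μ)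
    (hne : ¬ ρ =ᵐ[μ] 0) : 0 < ∫ x, ρ x ∂μ :=
  (integral_nonneg_of_ae hρ0).lt_of_ne fun h =>
    hne ((integral_eq_zero_iff_of_nonneg_ae hρ0 hρ).mp h.symm)

lemma lqNorm_pos (hq : 0 < q) (hρ0 : 0 ≤ᵐ[μ] ρ)
    (hρ : MemLp ρ (ENNReal.ofReal q) μ) (hne : ¬ ρ =ᵐ[μ] 0) : 0 < lqNorm μ q ρ := by
  refine Real.rpow_pos_of_pos (integral_pos_of_not_ae_eq_zero ?_
    (integrable_rpow_of_memLp hq hρ0 hρ) fun h => hne ?_) _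
  · filter_upwards [hρ0] with x hx using Real.rpow_nonneg hx q
  · filter_upwards [hρ0, h] with _ hx h using (Real.rpow_eq_zero hx hq.ne').mp h

lemma lqNorm_mono (hq : 0 < q) (hρ : 0 ≤ᵐ[μ] ρ) (h : ρ ≤ᵐ[μ] σ)
    (hσ : MemLp σ (ENNReal.ofReal q) μ) : lqNorm μ q ρ ≤ lqNorm μ q σ := by
  have hσ0 : 0 ≤ᵐ[μ] σ := hρ.trans h
  refine Real.rpow_le_rpow (integral_rpow_nonneg hρ q) ?_ (by positivity)
  refine integral_mono_of_nonneg ?_ (integrable_rpow_of_memLp hq hσ0 hσ) ?_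
  · filter_upwards [hρ] with x hx using Real.rpow_nonneg hx q
  · filter_upwards [hρ, h] with x hx hle using Real.rpow_le_rpow hx hle hq.le

lemma integrable_mul_of_holderConjugate (hpq : p.HolderConjugate q)
    (hV : MemLp V (ENNReal.ofReal p) μ) (hρ : MemLp ρ (ENNReal.ofReal q) μ) :
    Integrable (fun x => V x * ρ x) μ :=
  have := hpq.ennrealOfReal
  hV.integrable_mul hρ

lemma integral_mul_le_mul_lqNorm (hpq : p.HolderConjugate q) (hM : 0 ≤ M) (hV0 : 0 ≤ᵐ[μ] V)
    (hρ0 : 0 ≤ᵐ[μ] ρ) (hV : MemLp V (ENNReal.ofReal p) μ) (hρ : MemLp ρ (ENNReal.ofReal q) μ)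
    (hVM : eLpNorm V (ENNReal.ofReal p) μ ≤ ENNReal.ofReal M) :
    ∫ x, V x * ρ x ∂μ ≤ M * lqNorm μ q ρ := by
  refine (integral_mul_le_Lp_mul_Lq_of_nonneg hpq hV0 hρ0 hV hρ).trans ?_
  refine mul_le_mul_of_nonneg_right ?_ (lqNorm_nonneg hρ0)
  rw [one_div, Real.rpow_inv_le_iff_of_pos (integral_rpow_nonneg hV0 p) hM hpq.pos]
  exact integral_rpow_le_of_eLpNorm_le hpq.pos hM hV0 hV hVM

-- Young's inequality holds pointwise, so if its integrated form is an equality it is one a.e.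
lemma ae_eq_rpow_sub_one_of_one_le_integral_mul (hpq : p.HolderConjugate q)
    (hV0 : 0 ≤ᵐ[μ] V) (hρ0 : 0 ≤ᵐ[μ] ρ) (hV : MemLp V (ENNReal.ofReal p) μ)
    (hρ : MemLp ρ (ENNReal.ofReal q) μ) (hVle : ∫ x, V x ^ p ∂μ ≤ 1)
    (hρle : ∫ x, ρ x ^ q ∂μ ≤ 1) (h : 1 ≤ ∫ x, V x * ρ x ∂μ) :
    V =ᵐ[μ] fun x => ρ x ^ (q - 1) := by
  have intVρ := integrable_mul_of_holderConjugate hpq hV hρ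
  have intV := (integrable_rpow_of_memLp hpq.pos hV0 hV).div_const p
  have intρ := (integrable_rpow_of_memLp hpq.symm.pos hρ0 hρ).div_const q
  have young : (fun x => V x * ρ x) ≤ᵐ[μ] fun x => V x ^ p / p + ρ x ^ q / q := by
    filter_upwards [hV0, hρ0] with x hVx hρx using Real.young_inequality_of_nonneg hVx hρx hpq
  have integral_young_le : ∫ x, (V x ^ p / p + ρ x ^ q / q) ∂μ ≤ ∫ x, V x * ρ x ∂μ :=
    calc ∫ x, (V x ^ p / p + ρ x ^ q / q) ∂μ
        = (∫ x, V x ^ p ∂μ) / p + (∫ x, ρ x ^ q ∂μ) / q := by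
          rw [integral_add intV intρ, integral_div, integral_div]
      _ ≤ 1 / p + 1 / q := by
          have := hpq.nonneg
          have := hpq.symm.nonneg
          gcongr
      _ = 1 := by simpa using hpq.inv_add_inv_eq_one
      _ ≤ ∫ x, V x * ρ x ∂μ := h
  have young_eq := (integral_eq_iff_of_ae_le intVρ (intV.add intρ) young).mp
    ((integral_mono_ae intVρ (intV.add intρ) young).antisymm integral_young_le)
  filter_upwards [hV0, hρ0, young_eq] with x hVx hρx hx
    using eq_rpow_sub_one_of_mul_eq_young hVx hρx hpq hx

/-- The nonnegative function of `L^p` norm `M` that norms `ρ ∈ L^q`; it is also the derivative of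
`M ‖·‖_q` at `ρ`. The optimal potential is the case `ρ = u₀²`. -/
def dualPotential (μ : Measure α) (q M : ℝ) (ρ : α → ℝ) (x : α) : ℝ :=
  M * lqNorm μ q ρ ^ (1 - q) * ρ x ^ (q - 1)

lemma dualPotential_nonneg (hM : 0 ≤ M) (hρ : 0 ≤ᵐ[μ] ρ) : 0 ≤ᵐ[μ] dualPotential μ q M ρ := by
  filter_upwards [hρ] with x hx
  exact mul_nonneg (mul_nonneg hM (Real.rpow_nonneg (lqNorm_nonneg hρ) _)) (Real.rpow_nonneg hx _)

lemma memLp_rpow_sub_one (hpq : p.HolderConjugate q) (hρ0 : 0 ≤ᵐ[μ] ρ)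
    (hρ : MemLp ρ (ENNReal.ofReal q) μ) : MemLp (fun x => ρ x ^ (q - 1)) (ENNReal.ofReal p) μ := by
  have norm_pow := hρ.norm_rpow_div (ENNReal.ofReal (q - 1))
  rw [ENNReal.toReal_ofReal hpq.symm.sub_one_pos.le,
    ← ENNReal.ofReal_div_of_pos hpq.symm.sub_one_pos, ← hpq.symm.conjugate_eq] at norm_pow
  refine norm_pow.ae_eq ?_
  filter_upwards [hρ0] with x hx using by rw [Real.norm_of_nonneg hx]

lemma memLp_dualPotential (hpq : p.HolderConjugate q) (hρ0 : 0 ≤ᵐ[μ] ρ)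
    (hρ : MemLp ρ (ENNReal.ofReal q) μ) :
    MemLp (dualPotential μ q M ρ) (ENNReal.ofReal p) μ :=
  (memLp_rpow_sub_one hpq hρ0 hρ).const_mul _

lemma integral_dualPotential_mul (hq : 0 < q) (hρ0 : 0 ≤ᵐ[μ] ρ) (hpos : 0 < lqNorm μ q ρ) :
    ∫ x, dualPotential μ q M ρ x * ρ x ∂μ = M * lqNorm μ q ρ :=
  calc ∫ x, dualPotential μ q M ρ x * ρ x ∂μ
      = ∫ x, M * lqNorm μ q ρ ^ (1 - q) * ρ x ^ q ∂μ := by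
        refine integral_congr_ae ?_
        filter_upwards [hρ0] with x hx
        rw [dualPotential, mul_assoc, rpow_sub_one_mul_self hx hq]
    _ = M * (lqNorm μ q ρ ^ (1 - q) * lqNorm μ q ρ ^ q) := by
        rw [integral_const_mul, lqNorm_rpow hq hρ0, mul_assoc]
    _ = M * lqNorm μ q ρ := by rw [← Real.rpow_add hpos, sub_add_cancel, Real.rpow_one]

lemma eLpNorm_dualPotential (hpq : p.HolderConjugate q) (hM : 0 ≤ M) (hρ0 : 0 ≤ᵐ[μ] ρ)
    (hρ : MemLp ρ (ENNReal.ofReal q) μ) (hpos : 0 < lqNorm μ q ρ) :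
    eLpNorm (dualPotential μ q M ρ) (ENNReal.ofReal p) μ = ENNReal.ofReal M := by
  have hexp : (1 - q) * p = -q := by linarith [hpq.symm.sub_one_mul_conj]
  have integral_eq : ∫ x, dualPotential μ q M ρ x ^ p ∂μ = M ^ p := by
    calc ∫ x, dualPotential μ q M ρ x ^ p ∂μ
        = ∫ x, M ^ p * lqNorm μ q ρ ^ (-q) * ρ x ^ q ∂μ := by
          refine integral_congr_ae ?_
          filter_upwards [hρ0] with x hx
          rw [dualPotential, Real.mul_rpow (by positivity) (Real.rpow_nonneg hx _),
            Real.mul_rpow hM (by positivity), ← Real.rpow_mul hpos.le, ← Real.rpow_mul hx, hexp,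
            hpq.symm.sub_one_mul_conj]
      _ = M ^ p * (lqNorm μ q ρ ^ (-q) * lqNorm μ q ρ ^ q) := by
          rw [integral_const_mul, lqNorm_rpow hpq.symm.pos hρ0, mul_assoc]
      _ = M ^ p := by rw [← Real.rpow_add hpos, neg_add_cancel, Real.rpow_zero, mul_one]
  rw [eLpNorm_ofReal_of_nonneg hpq.pos (dualPotential_nonneg hM hρ0)
    (memLp_dualPotential hpq hρ0 hρ), integral_eq, Real.rpow_rpow_inv hM hpq.ne_zero]

lemma ae_eq_dualPotential_of_integral_mul_eq (hpq : p.HolderConjugate q) (hM : 0 < M)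
    (hV0 : 0 ≤ᵐ[μ] V) (hρ0 : 0 ≤ᵐ[μ] ρ) (hV : MemLp V (ENNReal.ofReal p) μ)
    (hρ : MemLp ρ (ENNReal.ofReal q) μ) (hVM : eLpNorm V (ENNReal.ofReal p) μ ≤ ENNReal.ofReal M)
    (hpos : 0 < lqNorm μ q ρ) (h : ∫ x, V x * ρ x ∂μ = M * lqNorm μ q ρ) :
    V =ᵐ[μ] dualPotential μ q M ρ := by
  set N := lqNorm μ q ρ
  have normalized_V : ∫ x, (M⁻¹ * V x) ^ p ∂μ ≤ 1 := by
    rw [integral_congr_ae (g := fun x => M⁻¹ ^ p * V x ^ p), integral_const_mul,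
      Real.inv_rpow hM.le, inv_mul_le_one₀ (by positivity)]
    · exact integral_rpow_le_of_eLpNorm_le hpq.pos hM.le hV0 hV hVM
    · filter_upwards [hV0] with x hx using Real.mul_rpow (by positivity) hx
  have normalized_ρ : ∫ x, (N⁻¹ * ρ x) ^ q ∂μ ≤ 1 := by
    rw [integral_congr_ae (g := fun x => N⁻¹ ^ q * ρ x ^ q), integral_const_mul,
      ← lqNorm_rpow hpq.symm.pos hρ0, Real.inv_rpow hpos.le, inv_mul_cancel₀ (by positivity)]
    filter_upwards [hρ0] with x hx using Real.mul_rpow (by positivity) hx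
  have normalized_integral : 1 ≤ ∫ x, M⁻¹ * V x * (N⁻¹ * ρ x) ∂μ := by
    simp only [fun x => mul_mul_mul_comm M⁻¹ (V x) N⁻¹ (ρ x)]
    rw [integral_const_mul, h, mul_mul_mul_comm, inv_mul_cancel₀ hM.ne',
      inv_mul_cancel₀ hpos.ne', one_mul]
  have normalized_eq := ae_eq_rpow_sub_one_of_one_le_integral_mul hpq
    (V := fun x => M⁻¹ * V x) (ρ := fun x => N⁻¹ * ρ x)
    (by filter_upwards [hV0] with x hx using mul_nonneg (by positivity) hx)
    (by filter_upwards [hρ0] with x hx using mul_nonneg (by positivity) hx)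
    (hV.const_mul _) (hρ.const_mul _) normalized_V normalized_ρ normalized_integral
  filter_upwards [normalized_eq, hρ0] with x hx hρx
  rw [Real.mul_rpow (by positivity) hρx, Real.inv_rpow hpos.le, ← Real.rpow_neg hpos.le, neg_sub,
    inv_mul_eq_iff_eq_mul₀ hM.ne', ← mul_assoc] at hx
  exact hx

lemma mul_lqNorm_add_sub_le (hpq : p.HolderConjugate q) (hM : 0 ≤ M) (hρ0 : 0 ≤ᵐ[μ] ρ)
    (hσ0 : 0 ≤ᵐ[μ] σ) (hρ : MemLp ρ (ENNReal.ofReal q) μ) (hσ : MemLp σ (ENNReal.ofReal q) μ)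
    (hpos : 0 < lqNorm μ q ρ) :
    M * lqNorm μ q (ρ + σ) - M * lqNorm μ q ρ
      ≤ M * lqNorm μ q ρ ^ (1 - q) * ∫ x, (ρ + σ) x ^ (q - 1) * σ x ∂μ := by
  have hsum0 : 0 ≤ᵐ[μ] ρ + σ := by
    filter_upwards [hρ0, hσ0] with x hx hy using add_nonneg hx hy
  have hsum := hρ.add hσ
  have norm_le : lqNorm μ q ρ ≤ lqNorm μ q (ρ + σ) :=
    lqNorm_mono hpq.symm.pos hρ0 (by filter_upwards [hσ0] with x hx using by simpa using hx) hsum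
  have hpos' := hpos.trans_le norm_le
  have hV := memLp_dualPotential (M := M) hpq hsum0 hsum
  have norming := integral_dualPotential_mul (M := M) hpq.symm.pos hsum0 hpos'
  have hölder := integral_mul_le_mul_lqNorm hpq hM (dualPotential_nonneg hM hsum0) hρ0 hV hρ
    (eLpNorm_dualPotential hpq hM hsum0 hsum hpos').le
  calc M * lqNorm μ q (ρ + σ) - M * lqNorm μ q ρ
      ≤ ∫ x, dualPotential μ q M (ρ + σ) x * σ x ∂μ := by
        simp only [Pi.add_apply, mul_add] at norming
        rw [integral_add (integrable_mul_of_holderConjugate hpq hV hρ)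
          (integrable_mul_of_holderConjugate hpq hV hσ)] at norming
        linarith
    _ = M * lqNorm μ q (ρ + σ) ^ (1 - q) * ∫ x, (ρ + σ) x ^ (q - 1) * σ x ∂μ := by
        simp_rw [dualPotential, mul_assoc, integral_const_mul]
    _ ≤ M * lqNorm μ q ρ ^ (1 - q) * ∫ x, (ρ + σ) x ^ (q - 1) * σ x ∂μ := by
        refine mul_le_mul_of_nonneg_right (mul_le_mul_of_nonneg_left
          (Real.rpow_le_rpow_of_nonpos hpos norm_le (by linarith [hpq.symm.lt])) hM)
          (integral_nonneg_of_ae ?_)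
        filter_upwards [hsum0, hσ0] with x hx hy using mul_nonneg (Real.rpow_nonneg hx _) hy

lemma tendsto_integral_rpow_add_smul_mul (hpq : p.HolderConjugate q) (hρ0 : 0 ≤ᵐ[μ] ρ)
    (hσ0 : 0 ≤ᵐ[μ] σ) (hρ : MemLp ρ (ENNReal.ofReal q) μ) (hσ : MemLp σ (ENNReal.ofReal q) μ)
    {s : ℕ → ℝ} (hs0 : ∀ n, 0 ≤ s n) (hs1 : ∀ n, s n ≤ 1) (hs : Tendsto s atTop (nhds 0)) :
    Tendsto (fun n => ∫ x, (ρ + s n • σ) x ^ (q - 1) * σ x ∂μ) atTop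
      (nhds (∫ x, ρ x ^ (q - 1) * σ x ∂μ)) := by
  have hq1 : 0 < q - 1 := hpq.symm.sub_one_pos
  have hsum0 : 0 ≤ᵐ[μ] ρ + σ := by
    filter_upwards [hρ0, hσ0] with x hx hy using add_nonneg hx hy
  refine tendsto_integral_of_dominated_convergence (fun x => (ρ + σ) x ^ (q - 1) * σ x) ?_
    (integrable_mul_of_holderConjugate hpq (memLp_rpow_sub_one hpq hsum0 (hρ.add hσ)) hσ) ?_ ?_
  · exact fun n => ((hρ.1.add (hσ.1.const_smul (s n))).aemeasurable.pow_const
      _).aestronglyMeasurable.mul hσ.1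
  · intro n
    filter_upwards [hρ0, hσ0] with x hx hy
    have hs_le : s n * σ x ≤ σ x := mul_le_of_le_one_left hy (hs1 n)
    have hs_nonneg : 0 ≤ s n * σ x := mul_nonneg (hs0 n) hy
    simp only [Pi.add_apply, Pi.smul_apply, smul_eq_mul, Pi.zero_apply] at hx hy ⊢
    rw [Real.norm_of_nonneg (by positivity)]
    gcongr
  · filter_upwards with x
    have h : Tendsto (fun n => (ρ + s n • σ) x) atTop (nhds (ρ x)) := by
      simpa using (hs.mul_const (σ x)).const_add (ρ x)
    exact (h.rpow_const (Or.inr hq1.le)).mul_const _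

lemma le_integral_dualPotential_mul (hpq : p.HolderConjugate q) (hM : 0 ≤ M) (hρ0 : 0 ≤ᵐ[μ] ρ)
    (hσ0 : 0 ≤ᵐ[μ] σ) (hρ : MemLp ρ (ENNReal.ofReal q) μ) (hσ : MemLp σ (ENNReal.ofReal q) μ)
    (hpos : 0 < lqNorm μ q ρ) {A : ℝ}
    (hA : ∀ s > 0, s * A ≤ M * lqNorm μ q (ρ + s • σ) - M * lqNorm μ q ρ) :
    A ≤ ∫ x, dualPotential μ q M ρ x * σ x ∂μ := by
  have le_of_pos (s : ℝ) (hs : 0 < s) :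
      A ≤ M * lqNorm μ q ρ ^ (1 - q) * ∫ x, (ρ + s • σ) x ^ (q - 1) * σ x ∂μ := by
    have bound := (hA s hs).trans (mul_lqNorm_add_sub_le hpq hM hρ0
      (by filter_upwards [hσ0] with x hx using smul_nonneg hs.le hx) hρ (hσ.const_smul s) hpos)
    simp_rw [Pi.smul_apply, smul_eq_mul, mul_left_comm _ s, integral_const_mul] at bound
    rw [mul_left_comm] at bound
    exact le_of_mul_le_mul_left bound hs
  have lim := (tendsto_integral_rpow_add_smul_mul hpq hρ0 hσ0 hρ hσ
    (s := fun n => 1 / ((n : ℝ) + 1)) (fun n => by positivity)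
    (fun n => by rw [div_le_one (by positivity)]; linarith [n.cast_nonneg (α := ℝ)])
    tendsto_one_div_add_atTop_nhds_zero_nat).const_mul (M * lqNorm μ q ρ ^ (1 - q))
  simp_rw [dualPotential, mul_assoc (M * _), integral_const_mul]
  exact ge_of_tendsto' lim fun n => le_of_pos _ (by positivity)

end Duality

lemma memLp_sq {α : Type*} [MeasurableSpace α] {μ : Measure α} {q : ℝ} {f : α → ℝ}
    (hf : MemLp f (ENNReal.ofReal (2 * q)) μ) :
    MemLp (fun x => f x ^ 2) (ENNReal.ofReal q) μ := by
  simpa [ENNReal.ofReal_mul, mul_comm (2 : ENNReal), ENNReal.mul_div_cancel_right]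
    using hf.norm_rpow_div 2

lemma ae_sq_nonneg {α : Type*} [MeasurableSpace α] {μ : Measure α} (f : α → ℝ) :
    0 ≤ᵐ[μ] fun x => f x ^ 2 :=
  ae_of_all _ fun x => sq_nonneg (f x)

section DominatedContinuity

variable {α : Type*} [MeasurableSpace α] {μ : Measure α} {A B : (α → ℝ) → ℝ} {V f g h : α → ℝ}
  {c q M : ℝ}

/-- Sequential continuity of the functional `A` along sequences that converge almost everywhere
and are dominated by `h`. It is how functionals without any topology on their domain are passed to
the limit. -/
def DominatedContinuous (μ : Measure α) (A : (α → ℝ) → ℝ) (h : α → ℝ) : Prop :=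
  ∀ (f : ℕ → α → ℝ) (g : α → ℝ), (∀ n, AEStronglyMeasurable (f n) μ) →
    (∀ n, ∀ᵐ x ∂μ, |f n x| ≤ |h x|) →
    (∀ᵐ x ∂μ, Tendsto (fun n => f n x) atTop (nhds (g x))) →
    Tendsto (fun n => A (f n)) atTop (nhds (A g))

lemma DominatedContinuous.const_mul (hA : DominatedContinuous μ A h) (c : ℝ) :
    DominatedContinuous μ (fun f => c * A f) h :=
  fun f g hf hfh hfg => (hA f g hf hfh hfg).const_mul c

lemma DominatedContinuous.sub (hA : DominatedContinuous μ A h) (hB : DominatedContinuous μ B h) :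
    DominatedContinuous μ (fun f => A f - B f) h :=
  fun f g hf hfh hfg => (hA f g hf hfh hfg).sub (hB f g hf hfh hfg)

lemma DominatedContinuous.comp_sqrt_sq_add_sq
    (hA : DominatedContinuous μ A fun x => √(h x ^ 2 + g x ^ 2)) (hg : AEStronglyMeasurable g μ) :
    DominatedContinuous μ (fun f => A fun x => √(f x ^ 2 + g x ^ 2)) h := by
  intro f l hf hfh hfl
  refine hA _ _ (fun n => ?_) (fun n => ?_) ?_
  · exact (((hf n).pow 2).add (hg.pow 2)).aemeasurable.sqrt.aestronglyMeasurable
  · filter_upwards [hfh n] with x hx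
    rw [abs_of_nonneg (Real.sqrt_nonneg _), abs_of_nonneg (Real.sqrt_nonneg _)]
    exact Real.sqrt_le_sqrt (add_le_add_left (sq_le_sq.mpr hx) _)
  · filter_upwards [hfl] with x hx using ((hx.pow 2).add_const _).sqrt

lemma dominatedContinuous_integral {Φ : α → ℝ → ℝ} (continuous : ∀ x, Continuous (Φ x))
    (mono : ∀ x s t, |s| ≤ |t| → |Φ x s| ≤ |Φ x t|)
    (measurable : ∀ f, AEStronglyMeasurable f μ → AEStronglyMeasurable (fun x => Φ x (f x)) μ)
    (integrable : Integrable (fun x => Φ x (h x)) μ) :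
    DominatedContinuous μ (fun f => ∫ x, Φ x (f x) ∂μ) h := by
  intro f g hf hfh hfg
  refine tendsto_integral_of_dominated_convergence (fun x => |Φ x (h x)|)
    (fun n => measurable _ (hf n)) integrable.abs (fun n => ?_) ?_
  · filter_upwards [hfh n] with x hx using mono x _ _ hx
  · filter_upwards [hfg] with x hx using ((continuous x).tendsto _).comp hx

lemma dominatedContinuous_integral_mul_sq (hV : AEStronglyMeasurable V μ)
    (h_int : Integrable (fun x => V x * h x ^ 2) μ) :
    DominatedContinuous μ (fun f => ∫ x, V x * f x ^ 2 ∂μ) h := by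
  refine dominatedContinuous_integral (Φ := fun x t => V x * t ^ 2) (fun x => by fun_prop)
    (fun x s t hst => ?_) (fun f hf => hV.mul (hf.pow 2)) h_int
  rw [abs_mul, abs_mul, abs_pow, abs_pow]
  gcongr

lemma dominatedContinuous_integral_sq (h_int : Integrable (fun x => h x ^ 2) μ) :
    DominatedContinuous μ (fun f => ∫ x, f x ^ 2 ∂μ) h := by
  simpa using dominatedContinuous_integral_mul_sq (V := 1) aestronglyMeasurable_const
    (by simpa using h_int)

lemma dominatedContinuous_lqNorm_sq (hq : 0 < q)
    (hh : MemLp (fun x => h x ^ 2) (ENNReal.ofReal q) μ) :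
    DominatedContinuous μ (fun f => lqNorm μ q fun x => f x ^ 2) h := by
  have integral_pow : DominatedContinuous μ (fun f => ∫ x, (f x ^ 2) ^ q ∂μ) h := by
    refine dominatedContinuous_integral (Φ := fun _ t => (t ^ 2) ^ q)
      (fun _ => (continuous_pow 2).rpow_const fun _ => Or.inr hq.le) (fun _ s t hst => ?_)
      (fun f hf => ((hf.pow 2).aemeasurable.pow_const q).aestronglyMeasurable)
      (integrable_rpow_of_memLp hq (ae_sq_nonneg h) hh)
    rw [abs_of_nonneg (by positivity), abs_of_nonneg (by positivity)]
    exact Real.rpow_le_rpow (sq_nonneg s) (sq_le_sq.mpr hst) hq.le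
  exact fun f g hf hfh hfg => (integral_pow f g hf hfh hfg).rpow_const (Or.inr (by positivity))

/-- `J ≥ c` says that this functional is bounded by the energy. As a function of the density `f²`
it is concave. -/
def rayleighGap (μ : Measure α) (c M q : ℝ) (f : α → ℝ) : ℝ :=
  c * ∫ x, f x ^ 2 ∂μ - M * lqNorm μ q fun x => f x ^ 2

lemma rayleighGap_sqrt_sq_add_sq {s : ℝ} (hf : MemLp f 2 μ) (hg : MemLp g 2 μ) (hs : 0 ≤ s) :
    rayleighGap μ c M q (fun x => √(f x ^ 2 + (√s * g x) ^ 2))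
      = c * (∫ x, f x ^ 2 ∂μ + s * ∫ x, g x ^ 2 ∂μ)
        - M * lqNorm μ q ((fun x => f x ^ 2) + s • fun x => g x ^ 2) := by
  have sq_eq (x : α) : √(f x ^ 2 + (√s * g x) ^ 2) ^ 2 = f x ^ 2 + s * g x ^ 2 := by
    rw [Real.sq_sqrt (by positivity), mul_pow, Real.sq_sqrt hs]
  simp only [rayleighGap, sq_eq]
  rw [integral_add hf.integrable_sq (hg.integrable_sq.const_mul s), integral_const_mul]
  rfl

lemma dominatedContinuous_rayleighGap [IsFiniteMeasure μ] (hq : 1 ≤ q)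
    (hh : MemLp (fun x => h x ^ 2) (ENNReal.ofReal q) μ) :
    DominatedContinuous μ (rayleighGap μ c M q) h :=
  ((dominatedContinuous_integral_sq (hh.integrable (by simpa using hq))).const_mul c).sub
    ((dominatedContinuous_lqNorm_sq (by linarith) hh).const_mul M)

end DominatedContinuity

section TestFunctions

variable {s : Set (ℝ × ℝ)} {f g φ η : ℝ × ℝ → ℝ} {ε k : ℝ}

lemma isOpen_Omega : IsOpen Omega := isOpen_Ioo.prod isOpen_Ioo

lemma measurableSet_Omega : MeasurableSet Omega := isOpen_Omega.measurableSet

instance isFiniteMeasure_restrict_Omega : IsFiniteMeasure (volume.restrict Omega) := by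
  have hsub : Omega ⊆ Icc (0 : ℝ) 1 ×ˢ Icc (0 : ℝ) 1 :=
    prod_mono Ioo_subset_Icc_self Ioo_subset_Icc_self
  exact isFiniteMeasure_restrict.mpr
    ((measure_mono hsub).trans_lt (isCompact_Icc.prod isCompact_Icc).measure_lt_top).ne

lemma IsTestOn.continuous (h : IsTestOn s φ) : Continuous φ := h.1.continuous

lemma IsTestOn.differentiable (h : IsTestOn s φ) : Differentiable ℝ φ :=
  h.1.differentiable (by simp)

lemma IsTestOn.fderiv_apply (h : IsTestOn s φ) (v : ℝ × ℝ) : IsTestOn s fun p => fderiv ℝ φ p v :=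
  ⟨(h.1.fderiv_right (by simp)).clm_apply contDiff_const, h.2.1.fderiv_apply ℝ v,
    (tsupport_fderiv_apply_subset ℝ v).trans h.2.2⟩

lemma IsTestOn.memLp_mul {w : ℝ × ℝ → ℝ} (h : IsTestOn s φ) (hs : IsOpen s)
    (hw : ContinuousOn w s) (r : ENNReal) :
    MemLp (fun p => w p * φ p) r (volume.restrict s) := by
  have hsub : tsupport (fun p => w p * φ p) ⊆ tsupport φ := tsupport_mul_subset_right
  exact ((hw.mul h.continuous.continuousOn).continuous_of_tsupport_subset hs
    (hsub.trans h.2.2)).memLp_of_hasCompactSupport h.2.1.mul_left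

lemma IsTestOn.memLp (h : IsTestOn s φ) (r : ENNReal) : MemLp φ r (volume.restrict s) :=
  h.continuous.memLp_of_hasCompactSupport h.2.1

lemma IsTestOn.integral_mul_fderiv (h : IsTestOn s φ) (hη : IsTestOn s η) (v : ℝ × ℝ) :
    ∫ p in s, φ p * fderiv ℝ η p v = - ∫ p in s, fderiv ℝ φ p v * η p := by
  have integrable_mul {f g : ℝ × ℝ → ℝ} (hf : IsTestOn s f) (hg : IsTestOn s g) :
      Integrable fun p => f p * g p :=
    (hf.continuous.mul hg.continuous).integrable_of_hasCompactSupport hf.2.1.mul_right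
  rw [setIntegral_eq_integral_of_forall_compl_eq_zero,
    setIntegral_eq_integral_of_forall_compl_eq_zero]
  · exact integral_mul_fderiv_eq_neg_fderiv_mul_of_integrable (integrable_mul (h.fderiv_apply v) hη)
      (integrable_mul h (hη.fderiv_apply v)) (integrable_mul h hη)
      (fun p _ => h.differentiable p) (fun p _ => hη.differentiable p)
  · intro p hp
    rw [image_eq_zero_of_notMem_tsupport fun hmem => hp (hη.2.2 hmem), mul_zero]
  · intro p hp
    rw [image_eq_zero_of_notMem_tsupport fun hmem => hp (h.2.2 hmem), zero_mul]

lemma IsTestOn.comp₂ {F : ℝ × ℝ → ℝ} (hF : ContDiff ℝ (⊤ : ℕ∞) F) (hF0 : F (0, 0) = 0)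
    (hf : IsTestOn s f) (hg : IsTestOn s g) : IsTestOn s fun p => F (f p, g p) := by
  have hclosed := (isClosed_tsupport f).union (isClosed_tsupport g)
  have hsub : tsupport (fun p => F (f p, g p)) ⊆ tsupport f ∪ tsupport g := by
    refine closure_minimal (fun p hp => ?_) hclosed
    contrapose! hp
    rw [mem_union, not_or] at hp
    simp [image_eq_zero_of_notMem_tsupport hp.1, image_eq_zero_of_notMem_tsupport hp.2, hF0]
  exact ⟨hF.comp (hf.1.prodMk hg.1),
    (hf.2.1.isCompact.union hg.2.1.isCompact).of_isClosed_subset (isClosed_tsupport _) hsub,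
    hsub.trans (union_subset hf.2.2 hg.2.2)⟩

lemma IsTestOn.add (hf : IsTestOn s f) (hg : IsTestOn s g) : IsTestOn s fun p => f p + g p :=
  hf.comp₂ (F := fun z => z.1 + z.2) (by fun_prop) (by simp) hg

lemma IsTestOn.const_mul (hf : IsTestOn s f) (a : ℝ) : IsTestOn s fun p => a * f p :=
  hf.comp₂ (F := fun z => a * z.1) (by fun_prop) (by simp) hf

lemma IsTestOn.fderiv_const_mul_apply (hf : IsTestOn s f) (a : ℝ) (p v : ℝ × ℝ) :
    fderiv ℝ (fun p => a * f p) p v = a * fderiv ℝ f p v := by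
  rw [fderiv_const_mul (hf.differentiable p)]
  rfl

/-- A smooth substitute for truncation at height `k`. -/
def smoothTrunc (k x : ℝ) : ℝ := k * Real.sin (x / k)

lemma abs_smoothTrunc_le_abs (hk : 0 < k) (x : ℝ) : |smoothTrunc k x| ≤ |x| := by
  calc |smoothTrunc k x| = k * |Real.sin (x / k)| := by rw [smoothTrunc, abs_mul, abs_of_pos hk]
    _ ≤ k * |x / k| := mul_le_mul_of_nonneg_left Real.abs_sin_le_abs hk.le
    _ = |x| := by rw [abs_div, abs_of_pos hk, mul_div_cancel₀ _ hk.ne']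

lemma abs_smoothTrunc_le (hk : 0 < k) (x : ℝ) : |smoothTrunc k x| ≤ k := by
  rw [smoothTrunc, abs_mul, abs_of_pos hk]
  exact mul_le_of_le_one_right hk.le (Real.abs_sin_le_one _)

lemma contDiff_smoothTrunc : ContDiff ℝ (⊤ : ℕ∞) (smoothTrunc k) :=
  contDiff_const.mul (Real.contDiff_sin.comp (contDiff_id.div_const k))

lemma tendsto_smoothTrunc (x : ℝ) :
    Tendsto (fun n : ℕ => smoothTrunc (n + 1) x) atTop (nhds x) := by
  have hderiv : HasDerivAt (fun t : ℝ => Real.sin (x * t)) x 0 := by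
    simpa using ((hasDerivAt_id (0 : ℝ)).const_mul x).sin
  have hinv : Tendsto (fun n : ℕ => 1 / ((n : ℝ) + 1)) atTop (nhdsWithin 0 (Ioi 0)) :=
    tendsto_nhdsWithin_iff.mpr ⟨tendsto_one_div_add_atTop_nhds_zero_nat,
      Eventually.of_forall fun n => by simp only [mem_Ioi]; positivity⟩
  simpa [Function.comp_def, smoothTrunc, div_eq_mul_inv] using
    hderiv.tendsto_slope_zero_right.comp hinv

lemma IsTestOn.comp_smoothTrunc (hf : IsTestOn s f) (k : ℝ) :
    IsTestOn s fun p => smoothTrunc k (f p) :=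
  hf.comp₂ (F := fun z => smoothTrunc k z.1) (contDiff_smoothTrunc.comp contDiff_fst)
    (by simp [smoothTrunc]) hf

lemma sq_fderiv_smoothTrunc_le (hf : IsTestOn s f) (hk : 0 < k) (p v : ℝ × ℝ) :
    fderiv ℝ (fun p => smoothTrunc k (f p)) p v ^ 2 ≤ fderiv ℝ f p v ^ 2 := by
  have hfderiv : fderiv ℝ (fun p => smoothTrunc k (f p)) p v
      = Real.cos (f p / k) * fderiv ℝ f p v := by
    have h := ((((hf.differentiable p).hasFDerivAt.mul_const k⁻¹).sin).const_mul k).fderiv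
    simp only [← div_eq_mul_inv] at h
    simp only [smoothTrunc]
    rw [h]
    simp
    field_simp
  rw [hfderiv, mul_pow]
  exact mul_le_of_le_one_left (sq_nonneg _) (Real.cos_sq_le_one _)

/-- A smooth approximation of the Euclidean norm of `(a, b)` that vanishes at the origin. -/
def smoothModulus (ε a b : ℝ) : ℝ := √(a ^ 2 + b ^ 2 + ε ^ 2) - ε

lemma abs_smoothModulus_le (hε : 0 < ε) (a b : ℝ) :
    |smoothModulus ε a b| ≤ √(a ^ 2 + b ^ 2) := by
  have hlower : ε ≤ √(a ^ 2 + b ^ 2 + ε ^ 2) := Real.le_sqrt_of_sq_le (by nlinarith)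
  have hupper : √(a ^ 2 + b ^ 2 + ε ^ 2) ≤ √(a ^ 2 + b ^ 2) + ε := by
    refine Real.sqrt_le_iff.mpr ⟨by positivity, ?_⟩
    nlinarith [Real.sq_sqrt (by positivity : 0 ≤ a ^ 2 + b ^ 2), Real.sqrt_nonneg (a ^ 2 + b ^ 2)]
  rw [smoothModulus, abs_of_nonneg (by linarith)]
  linarith

lemma tendsto_smoothModulus (a b : ℝ) :
    Tendsto (fun n : ℕ => smoothModulus (1 / ((n : ℝ) + 1)) a b) atTop
      (nhds √(a ^ 2 + b ^ 2)) := by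
  have hcont : Continuous fun ε => smoothModulus ε a b := by unfold smoothModulus; fun_prop
  simpa [smoothModulus, Function.comp_def] using
    (hcont.tendsto 0).comp tendsto_one_div_add_atTop_nhds_zero_nat

lemma IsTestOn.comp_smoothModulus (hf : IsTestOn s f) (hg : IsTestOn s g) (hε : 0 < ε) :
    IsTestOn s fun p => smoothModulus ε (f p) (g p) := by
  refine hf.comp₂ (F := fun z => smoothModulus ε z.1 z.2) ?_ ?_ hg
  · exact (ContDiff.sqrt (by fun_prop) fun z => by positivity).sub contDiff_const
  · simp [smoothModulus, Real.sqrt_sq hε.le]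

lemma sq_fderiv_smoothModulus_le (hf : IsTestOn s f) (hg : IsTestOn s g) (hε : 0 < ε)
    (p v : ℝ × ℝ) :
    fderiv ℝ (fun p => smoothModulus ε (f p) (g p)) p v ^ 2
      ≤ fderiv ℝ f p v ^ 2 + fderiv ℝ g p v ^ 2 := by
  have hfderiv : fderiv ℝ (fun p => smoothModulus ε (f p) (g p)) p v
      = (f p * fderiv ℝ f p v + g p * fderiv ℝ g p v) / √(f p ^ 2 + g p ^ 2 + ε ^ 2) := by
    have hradicand := (((hf.differentiable p).hasFDerivAt.pow 2).add
      ((hg.differentiable p).hasFDerivAt.pow 2)).add_const (ε ^ 2)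
    have h := ((hradicand.sqrt (by simp only [Pi.add_apply]; positivity)).sub_const
      ε).fderiv
    refine (congrArg (· v) h).trans ?_
    simp
    field_simp
  rw [hfderiv, div_pow, Real.sq_sqrt (by positivity), div_le_iff₀ (by positivity)]
  nlinarith [sq_nonneg (f p * fderiv ℝ g p v - g p * fderiv ℝ f p v),
    mul_nonneg (add_nonneg (sq_nonneg (fderiv ℝ f p v)) (sq_nonneg (fderiv ℝ g p v)))
      (sq_nonneg ε)]

end TestFunctions

section WeakDerivatives

variable {s : Set (ℝ × ℝ)} {v : ℝ × ℝ} {u w g h η : ℝ × ℝ → ℝ}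

/-- `g` is a weak derivative of `u` on `s` in the direction `v`. For `v = (1, 0)` and `v = (0, 1)`
this is definitionally `HasWeakDerivXOn` and `HasWeakDerivYOn`. -/
def HasWeakDirDerivOn (v : ℝ × ℝ) (s : Set (ℝ × ℝ)) (u g : ℝ × ℝ → ℝ) : Prop :=
  LocallyIntegrableOn u s volume ∧ LocallyIntegrableOn g s volume ∧
  ∀ φ : ℝ × ℝ → ℝ, IsTestOn s φ → ∫ p in s, u p * fderiv ℝ φ p v = - ∫ p in s, g p * φ p

lemma IsTestOn.integrableOn_mul (hη : IsTestOn s η) (hs : MeasurableSet s)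
    (hu : LocallyIntegrableOn u s) : IntegrableOn (fun p => u p * η p) s := by
  have integrableOn_tsupport : IntegrableOn (fun p => u p * η p) (tsupport η) :=
    (hu.integrableOn_compact_subset hη.2.2 hη.2.1.isCompact).mul_continuousOn
      hη.continuous.continuousOn hη.2.1.isCompact
  refine integrableOn_tsupport.of_forall_sdiff_eq_zero hs fun p hp => ?_
  rw [image_eq_zero_of_notMem_tsupport hp.2, mul_zero]

lemma IsTestOn.hasWeakDirDerivOn (hη : IsTestOn s η) (v : ℝ × ℝ) :
    HasWeakDirDerivOn v s η fun p => fderiv ℝ η p v :=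
  ⟨hη.continuous.locallyIntegrable.locallyIntegrableOn s,
    (hη.fderiv_apply v).continuous.locallyIntegrable.locallyIntegrableOn s,
    fun _ hφ => hη.integral_mul_fderiv hφ v⟩

lemma HasWeakDirDerivOn.add (hs : MeasurableSet s) (hu : HasWeakDirDerivOn v s u g)
    (hw : HasWeakDirDerivOn v s w h) :
    HasWeakDirDerivOn v s (fun p => u p + w p) fun p => g p + h p := by
  refine ⟨hu.1.add hw.1, hu.2.1.add hw.2.1, fun φ hφ => ?_⟩
  simp only [add_mul]
  rw [integral_add ((hφ.fderiv_apply v).integrableOn_mul hs hu.1)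
      ((hφ.fderiv_apply v).integrableOn_mul hs hw.1),
    integral_add (hφ.integrableOn_mul hs hu.2.1) (hφ.integrableOn_mul hs hw.2.1),
    hu.2.2 φ hφ, hw.2.2 φ hφ, neg_add]

lemma HasWeakDirDerivOn.const_mul (hu : HasWeakDirDerivOn v s u g) (a : ℝ) :
    HasWeakDirDerivOn v s (fun p => a * u p) fun p => a * g p := by
  refine ⟨hu.1.smul a, hu.2.1.smul a, fun φ hφ => ?_⟩
  simp only [mul_assoc, integral_const_mul, hu.2.2 φ hφ, mul_neg]

end WeakDerivatives

section Energy

variable {α₁ α₂ a b : ℝ} {gx gy hx hy kx ky : ℝ × ℝ → ℝ}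

/-- The integrand of the quadratic form `a₁`, for a pair `gx, gy` of weak derivatives. -/
def energyDensity (α₁ α₂ : ℝ) (gx gy : ℝ × ℝ → ℝ) (p : ℝ × ℝ) : ℝ :=
  (p.2 ^ α₁ * gx p) ^ 2 + (p.1 ^ α₂ * gy p) ^ 2

/-- The quadratic form `a₁(u, u)` in terms of the weak derivatives `gx, gy` of `u`. -/
def energy (α₁ α₂ : ℝ) (gx gy : ℝ × ℝ → ℝ) : ℝ := ∫ p in Omega, energyDensity α₁ α₂ gx gy p

/-- The weighted gradient `(y^α₁ gx, x^α₂ gy)` is square integrable. -/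
def HasFiniteEnergy (α₁ α₂ : ℝ) (gx gy : ℝ × ℝ → ℝ) : Prop :=
  MemLp (fun p => p.2 ^ α₁ * gx p) 2 (volume.restrict Omega) ∧
  MemLp (fun p => p.1 ^ α₂ * gy p) 2 (volume.restrict Omega)

lemma HasFiniteEnergy.integrable (hg : HasFiniteEnergy α₁ α₂ gx gy) :
    Integrable (energyDensity α₁ α₂ gx gy) (volume.restrict Omega) :=
  hg.1.integrable_sq.add hg.2.integrable_sq

lemma HasFiniteEnergy.add (hg : HasFiniteEnergy α₁ α₂ gx gy) (hh : HasFiniteEnergy α₁ α₂ hx hy) :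
    HasFiniteEnergy α₁ α₂ (fun p => gx p + hx p) fun p => gy p + hy p := by
  simp only [HasFiniteEnergy, mul_add]
  exact ⟨hg.1.add hh.1, hg.2.add hh.2⟩

lemma HasFiniteEnergy.const_mul (hg : HasFiniteEnergy α₁ α₂ gx gy) (a : ℝ) :
    HasFiniteEnergy α₁ α₂ (fun p => a * gx p) fun p => a * gy p := by
  simp only [HasFiniteEnergy, mul_left_comm _ a]
  exact ⟨hg.1.const_mul a, hg.2.const_mul a⟩

lemma HasFiniteEnergy.sub (hg : HasFiniteEnergy α₁ α₂ gx gy) (hh : HasFiniteEnergy α₁ α₂ hx hy) :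
    HasFiniteEnergy α₁ α₂ (fun p => gx p - hx p) fun p => gy p - hy p := by
  simp only [HasFiniteEnergy, mul_sub]
  exact ⟨hg.1.sub hh.1, hg.2.sub hh.2⟩

lemma energyDensity_nonneg (gx gy : ℝ × ℝ → ℝ) (p : ℝ × ℝ) : 0 ≤ energyDensity α₁ α₂ gx gy p :=
  add_nonneg (sq_nonneg _) (sq_nonneg _)

lemma energy_nonneg (gx gy : ℝ × ℝ → ℝ) : 0 ≤ energy α₁ α₂ gx gy :=
  integral_nonneg (energyDensity_nonneg gx gy)

lemma energy_const_mul (a : ℝ) (gx gy : ℝ × ℝ → ℝ) :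
    energy α₁ α₂ (fun p => a * gx p) (fun p => a * gy p) = a ^ 2 * energy α₁ α₂ gx gy := by
  rw [energy, energy, ← integral_const_mul]
  congr 1 with p
  simp only [energyDensity]
  ring

lemma energy_le_add (hh : HasFiniteEnergy α₁ α₂ hx hy) (hk : HasFiniteEnergy α₁ α₂ kx ky)
    (hgx : ∀ p, gx p ^ 2 ≤ a * hx p ^ 2 + b * kx p ^ 2)
    (hgy : ∀ p, gy p ^ 2 ≤ a * hy p ^ 2 + b * ky p ^ 2) :
    energy α₁ α₂ gx gy ≤ a * energy α₁ α₂ hx hy + b * energy α₁ α₂ kx ky := by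
  have hint := (hh.integrable.const_mul a).add (hk.integrable.const_mul b)
  simp only [energy]
  rw [← integral_const_mul, ← integral_const_mul,
    ← integral_add (hh.integrable.const_mul a) (hk.integrable.const_mul b)]
  refine integral_mono_of_nonneg (ae_of_all _ (energyDensity_nonneg gx gy)) hint
    (ae_of_all _ fun p => ?_)
  have hx_le := mul_le_mul_of_nonneg_left (hgx p) (sq_nonneg (p.2 ^ α₁))
  have hy_le := mul_le_mul_of_nonneg_left (hgy p) (sq_nonneg (p.1 ^ α₂))
  simp only [energyDensity, mul_pow]
  linarith

lemma IsTest.hasFiniteEnergy {φ : ℝ × ℝ → ℝ} (hφ : IsTest φ) :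
    HasFiniteEnergy α₁ α₂ (pdx φ) (pdy φ) :=
  ⟨(hφ.fderiv_apply (1, 0)).memLp_mul isOpen_Omega
      (continuousOn_snd.rpow_const fun _ hp => Or.inl hp.2.1.ne') 2,
    (hφ.fderiv_apply (0, 1)).memLp_mul isOpen_Omega
      (continuousOn_fst.rpow_const fun _ hp => Or.inl hp.1.1.ne') 2⟩

lemma IsTest.energy_pdx_pdy_const_mul {φ : ℝ × ℝ → ℝ} (hφ : IsTest φ) (a : ℝ) :
    energy α₁ α₂ (pdx fun x => a * φ x) (pdy fun x => a * φ x)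
      = a ^ 2 * energy α₁ α₂ (pdx φ) (pdy φ) := by
  rw [← energy_const_mul]
  congr 1 <;> exact funext fun x => hφ.fderiv_const_mul_apply a x _

end Energy

section SobolevSpace

variable {α₁ α₂ : ℝ} {u gx gy w hx hy φ χ : ℝ × ℝ → ℝ}

lemma MemH1.hasFiniteEnergy (hu : MemH1 α₁ α₂ u gx gy) : HasFiniteEnergy α₁ α₂ gx gy :=
  ⟨hu.wgx, hu.wgy⟩

lemma IsTest.memH1 (hφ : IsTest φ) : MemH1 α₁ α₂ φ (pdx φ) (pdy φ) :=
  have finite : HasFiniteEnergy α₁ α₂ _ _ := hφ.hasFiniteEnergy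
  ⟨hφ.memLp 2, hφ.hasWeakDirDerivOn (1, 0), hφ.hasWeakDirDerivOn (0, 1), finite.1, finite.2⟩

lemma MemH1.add (hu : MemH1 α₁ α₂ u gx gy) (hw : MemH1 α₁ α₂ w hx hy) :
    MemH1 α₁ α₂ (fun p => u p + w p) (fun p => gx p + hx p) fun p => gy p + hy p :=
  have finite := hu.hasFiniteEnergy.add hw.hasFiniteEnergy
  ⟨hu.memL2.add hw.memL2, HasWeakDirDerivOn.add measurableSet_Omega hu.weakX hw.weakX,
    HasWeakDirDerivOn.add measurableSet_Omega hu.weakY hw.weakY, finite.1, finite.2⟩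

lemma MemH1.const_mul (hu : MemH1 α₁ α₂ u gx gy) (a : ℝ) :
    MemH1 α₁ α₂ (fun p => a * u p) (fun p => a * gx p) fun p => a * gy p :=
  have finite := hu.hasFiniteEnergy.const_mul a
  ⟨hu.memL2.const_mul a, HasWeakDirDerivOn.const_mul hu.weakX a,
    HasWeakDirDerivOn.const_mul hu.weakY a, finite.1, finite.2⟩

lemma H1Norm_eq_sqrt (h : HasFiniteEnergy α₁ α₂ gx gy) :
    H1Norm α₁ α₂ u gx gy = √((∫ p in Omega, u p ^ 2) + energy α₁ α₂ gx gy) := by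
  simp only [H1Norm, energy, energyDensity]
  rw [integral_add h.1.integrable_sq h.2.integrable_sq, add_assoc]

/-- Convergence `φ n → u` in the norm of `𝓗¹`, for differentiable `φ n`. -/
def TendstoH1 (α₁ α₂ : ℝ) (φ : ℕ → ℝ × ℝ → ℝ) (u gx gy : ℝ × ℝ → ℝ) : Prop :=
  Tendsto (fun n => ∫ p in Omega, (u p - φ n p) ^ 2) atTop (nhds 0) ∧
  Tendsto (fun n => energy α₁ α₂ (fun p => gx p - pdx (φ n) p) fun p => gy p - pdy (φ n) p) atTop
    (nhds 0)

lemma MemH10.exists_tendstoH1 (hu : MemH10 α₁ α₂ u gx gy) :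
    ∃ φ : ℕ → ℝ × ℝ → ℝ, (∀ n, IsTest (φ n)) ∧ TendstoH1 α₁ α₂ φ u gx gy := by
  choose φ hφ hnorm using fun n : ℕ => hu.2 (1 / ((n : ℝ) + 1)) (by positivity)
  have sum_le (n : ℕ) := (Real.sqrt_lt' (by positivity)).mp
    ((H1Norm_eq_sqrt (hu.1.hasFiniteEnergy.sub (hφ n).hasFiniteEnergy)).symm.trans_lt (hnorm n))
  have bound_tendsto : Tendsto (fun n : ℕ => (1 / ((n : ℝ) + 1)) ^ 2) atTop (nhds 0) := by
    simpa using tendsto_one_div_add_atTop_nhds_zero_nat (𝕜 := ℝ).pow 2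
  have distance_nonneg (n : ℕ) : 0 ≤ ∫ p in Omega, (u p - φ n p) ^ 2 :=
    integral_nonneg fun p => by positivity
  exact ⟨φ, hφ, squeeze_zero distance_nonneg
      (fun n => (le_add_of_nonneg_right (energy_nonneg _ _)).trans (sum_le n).le) bound_tendsto,
    squeeze_zero (fun n => energy_nonneg _ _)
      (fun n => (le_add_of_nonneg_left (distance_nonneg n)).trans (sum_le n).le) bound_tendsto⟩

lemma MemH1.memH10_of_tendstoH1 (hu : MemH1 α₁ α₂ u gx gy) {φ : ℕ → ℝ × ℝ → ℝ}
    (hφ : ∀ n, IsTest (φ n)) (h : TendstoH1 α₁ α₂ φ u gx gy) : MemH10 α₁ α₂ u gx gy := by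
  refine ⟨hu, fun ε hε => ?_⟩
  have norm_tendsto := (h.1.add h.2).sqrt
  rw [add_zero, Real.sqrt_zero] at norm_tendsto
  obtain ⟨n, hn⟩ := (norm_tendsto.eventually_lt_const hε).exists
  exact ⟨φ n, hφ n, by rwa [H1Norm_eq_sqrt (hu.hasFiniteEnergy.sub (hφ n).hasFiniteEnergy)]⟩

lemma IsTest.memH10 (hφ : IsTest φ) : MemH10 α₁ α₂ φ (pdx φ) (pdy φ) :=
  ⟨hφ.memH1, fun ε hε => ⟨φ, hφ, by simpa [H1Norm] using hε⟩⟩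

lemma integral_add_sq_le {α : Type*} [MeasurableSpace α] {μ : Measure α} {f g : α → ℝ}
    (hf : MemLp f 2 μ) (hg : MemLp g 2 μ) :
    ∫ x, (f x + g x) ^ 2 ∂μ ≤ 2 * ∫ x, f x ^ 2 ∂μ + 2 * ∫ x, g x ^ 2 ∂μ := by
  have hf2 := hf.integrable_sq.const_mul 2
  have hg2 := hg.integrable_sq.const_mul 2
  rw [← integral_const_mul, ← integral_const_mul, ← integral_add hf2 hg2]
  exact integral_mono (hf.add hg).integrable_sq (hf2.add hg2) fun x =>
    add_sq_le.trans_eq (mul_add _ _ _)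

lemma MemH10.add (hu : MemH10 α₁ α₂ u gx gy) (hw : MemH10 α₁ α₂ w hx hy) :
    MemH10 α₁ α₂ (fun p => u p + w p) (fun p => gx p + hx p) fun p => gy p + hy p := by
  obtain ⟨φ, hφ, hφu⟩ := hu.exists_tendstoH1
  obtain ⟨χ, hχ, hχw⟩ := hw.exists_tendstoH1
  have fderiv_add (n : ℕ) (p v : ℝ × ℝ) : fderiv ℝ (fun p => φ n p + χ n p) p v
      = fderiv ℝ (φ n) p v + fderiv ℝ (χ n) p v := by
    rw [fderiv_fun_add ((hφ n).differentiable p) ((hχ n).differentiable p)]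
    rfl
  refine (hu.1.add hw.1).memH10_of_tendstoH1 (fun n => (hφ n).add (hχ n)) ⟨?_, ?_⟩
  · refine squeeze_zero (fun n => integral_nonneg fun p => by positivity) (fun n => ?_)
      (by simpa using (hφu.1.const_mul 2).add (hχw.1.const_mul 2))
    simpa only [Pi.sub_apply, add_sub_add_comm] using
      integral_add_sq_le (hu.1.memL2.sub ((hφ n).memLp 2)) (hw.1.memL2.sub ((hχ n).memLp 2))
  · refine squeeze_zero (fun n => energy_nonneg _ _) (fun n => ?_)
      (by simpa using (hφu.2.const_mul 2).add (hχw.2.const_mul 2))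
    refine energy_le_add (hu.1.hasFiniteEnergy.sub (hφ n).hasFiniteEnergy)
      (hw.1.hasFiniteEnergy.sub (hχ n).hasFiniteEnergy) (fun p => ?_) (fun p => ?_) <;>
    · simp only [pdx, pdy, fderiv_add, add_sub_add_comm]
      exact add_sq_le.trans_eq (mul_add _ _ _)

lemma MemH10.const_mul (hu : MemH10 α₁ α₂ u gx gy) (a : ℝ) :
    MemH10 α₁ α₂ (fun p => a * u p) (fun p => a * gx p) fun p => a * gy p := by
  obtain ⟨φ, hφ, hφu⟩ := hu.exists_tendstoH1
  refine (hu.1.const_mul a).memH10_of_tendstoH1 (fun n => (hφ n).const_mul a) ⟨?_, ?_⟩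
  · simpa only [← mul_sub, mul_pow, integral_const_mul, mul_zero] using hφu.1.const_mul (a ^ 2)
  · simpa only [pdx, pdy, (hφ _).fderiv_const_mul_apply, ← mul_sub, energy_const_mul, mul_zero]
      using hφu.2.const_mul (a ^ 2)

end SobolevSpace

section Approximation

variable {α₁ α₂ η k : ℝ} {u gx gy f g : ℝ × ℝ → ℝ} {φ : ℕ → ℝ × ℝ → ℝ}
  {A : (ℝ × ℝ → ℝ) → ℝ} {r : ENNReal}

lemma exists_subseq_ae_tendsto_of_integral_sq {α : Type*} [MeasurableSpace α] {μ : Measure α}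
    {f : ℕ → α → ℝ} {g : α → ℝ} (hf : ∀ n, MemLp (f n) 2 μ) (hg : MemLp g 2 μ)
    (h : Tendsto (fun n => ∫ x, (g x - f n x) ^ 2 ∂μ) atTop (nhds 0)) :
    ∃ ns : ℕ → ℕ, StrictMono ns ∧
      ∀ᵐ x ∂μ, Tendsto (fun i => f (ns i) x) atTop (nhds (g x)) := by
  have eLpNorm_eq (n : ℕ) :
      eLpNorm (f n - g) 2 μ = ENNReal.ofReal √(∫ x, (g x - f n x) ^ 2 ∂μ) := by
    rw [((hf n).sub hg).eLpNorm_eq_integral_rpow_norm (by norm_num) (by norm_num),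
      Real.sqrt_eq_rpow]
    simp [sub_sq_comm]
  refine (tendstoInMeasure_of_tendsto_eLpNorm (p := 2) two_ne_zero (fun n => (hf n).1) hg.1
    ?_).exists_seq_tendsto_ae
  simpa only [eLpNorm_eq, Real.sqrt_zero, ENNReal.ofReal_zero] using
    ENNReal.tendsto_ofReal h.sqrt

lemma MemH10.exists_ae_tendsto (hu : MemH10 α₁ α₂ u gx gy) :
    ∃ φ : ℕ → ℝ × ℝ → ℝ, (∀ n, IsTest (φ n)) ∧ TendstoH1 α₁ α₂ φ u gx gy ∧
      ∀ᵐ p ∂(volume.restrict Omega), Tendsto (fun n => φ n p) atTop (nhds (u p)) := by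
  obtain ⟨φ, hφ, h⟩ := hu.exists_tendstoH1
  obtain ⟨ns, hns, hae⟩ :=
    exists_subseq_ae_tendsto_of_integral_sq (fun n => (hφ n).memLp 2) hu.1.memL2 h.1
  exact ⟨φ ∘ ns, fun n => hφ _, ⟨h.1.comp hns.tendsto_atTop, h.2.comp hns.tendsto_atTop⟩, hae⟩

lemma sq_le_one_add_mul_sq_add (hη : 0 < η) (a b : ℝ) :
    a ^ 2 ≤ (1 + η) * b ^ 2 + (1 + η⁻¹) * (b - a) ^ 2 := by
  have key : (1 + η) * b ^ 2 + (1 + η⁻¹) * (b - a) ^ 2 - a ^ 2 = (η * b + (b - a)) ^ 2 / η := by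
    field_simp
    ring
  have : 0 ≤ (η * b + (b - a)) ^ 2 / η := by positivity
  linarith

lemma TendstoH1.le_energy (h : TendstoH1 α₁ α₂ φ u gx gy) (hφ : ∀ n, IsTest (φ n))
    (hg : HasFiniteEnergy α₁ α₂ gx gy) {B : ℕ → ℝ} {b : ℝ} (hB : Tendsto B atTop (nhds b))
    (hle : ∀ n, B n ≤ energy α₁ α₂ (pdx (φ n)) (pdy (φ n))) : b ≤ energy α₁ α₂ gx gy := by
  have le_one_add_mul (η : ℝ) (hη : 0 < η) : b ≤ (1 + η) * energy α₁ α₂ gx gy := by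
    have bound_tendsto := (h.2.const_mul (1 + η⁻¹)).const_add ((1 + η) * energy α₁ α₂ gx gy)
    rw [mul_zero, add_zero] at bound_tendsto
    exact le_of_tendsto_of_tendsto' hB bound_tendsto fun n => (hle n).trans
      (energy_le_add hg (hg.sub (hφ n).hasFiniteEnergy)
        (fun p => sq_le_one_add_mul_sq_add hη _ _) fun p => sq_le_one_add_mul_sq_add hη _ _)
  have limit : Tendsto (fun η : ℝ => (1 + η) * energy α₁ α₂ gx gy) (nhdsWithin 0 (Ioi 0))
      (nhds (energy α₁ α₂ gx gy)) :=
    ((by fun_prop : Continuous fun η : ℝ => (1 + η) * energy α₁ α₂ gx gy).tendsto' 0 _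
      (by simp)).mono_left nhdsWithin_le_nhds
  exact ge_of_tendsto limit (eventually_nhdsWithin_of_forall le_one_add_mul)

lemma energy_smoothTrunc_le (hf : IsTest f) (hk : 0 < k) :
    energy α₁ α₂ (pdx fun p => smoothTrunc k (f p)) (pdy fun p => smoothTrunc k (f p))
      ≤ energy α₁ α₂ (pdx f) (pdy f) := by
  have hfin : HasFiniteEnergy α₁ α₂ (pdx f) (pdy f) := hf.hasFiniteEnergy
  simpa using energy_le_add (a := 1) (b := 0) hfin hfin
    (fun p => by simpa [pdx] using sq_fderiv_smoothTrunc_le hf hk p (1, 0))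
    fun p => by simpa [pdy] using sq_fderiv_smoothTrunc_le hf hk p (0, 1)

lemma MemH10.le_energy_smoothTrunc (hA : ∀ ψ, IsTest ψ → A ψ ≤ energy α₁ α₂ (pdx ψ) (pdy ψ))
    (hk : 0 < k) (hcont : DominatedContinuous (volume.restrict Omega) A fun _ => k)
    (hu : MemH10 α₁ α₂ u gx gy) : A (fun p => smoothTrunc k (u p)) ≤ energy α₁ α₂ gx gy := by
  obtain ⟨φ, hφ, hφu, hae⟩ := hu.exists_ae_tendsto
  refine hφu.le_energy hφ hu.1.hasFiniteEnergy
    (hcont (fun n p => smoothTrunc k (φ n p)) _ (fun n => ?_) (fun n => ?_) ?_)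
    fun n => (hA _ ((hφ n).comp_smoothTrunc k)).trans (energy_smoothTrunc_le (hφ n) hk)
  · exact ((hφ n).comp_smoothTrunc k).continuous.aestronglyMeasurable
  · exact ae_of_all _ fun p => (abs_smoothTrunc_le hk _).trans_eq (abs_of_pos hk).symm
  · filter_upwards [hae] with p hp using (contDiff_smoothTrunc.continuous.tendsto _).comp hp

lemma MemH10.le_energy (hA : ∀ ψ, IsTest ψ → A ψ ≤ energy α₁ α₂ (pdx ψ) (pdy ψ))
    (hcont : ∀ k : ℝ, DominatedContinuous (volume.restrict Omega) A fun _ => k)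
    (hu : MemH10 α₁ α₂ u gx gy) (hcontu : DominatedContinuous (volume.restrict Omega) A u) :
    A u ≤ energy α₁ α₂ gx gy := by
  refine le_of_tendsto' (hcontu (fun n p => smoothTrunc (n + 1) (u p)) u (fun n => ?_)
    (fun n => ?_) ?_) fun n => hu.le_energy_smoothTrunc hA (by positivity) (hcont (n + 1))
  · exact contDiff_smoothTrunc.continuous.comp_aestronglyMeasurable hu.1.memL2.1
  · exact ae_of_all _ fun p => abs_smoothTrunc_le_abs (by positivity) _
  · exact ae_of_all _ fun p => tendsto_smoothTrunc _

lemma memLp_sqrt_sq_add_sq {α : Type*} [MeasurableSpace α] {μ : Measure α} {f g : α → ℝ}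
    (hf : MemLp f r μ) (hg : MemLp g r μ) : MemLp (fun x => √(f x ^ 2 + g x ^ 2)) r μ := by
  refine (hf.norm.add hg.norm).of_le
    (((hf.1.pow 2).add (hg.1.pow 2)).aemeasurable.sqrt.aestronglyMeasurable)
    (ae_of_all _ fun x => ?_)
  rw [Real.norm_of_nonneg (Real.sqrt_nonneg _), Pi.add_apply,
    Real.norm_of_nonneg (by positivity)]
  refine Real.sqrt_le_iff.mpr ⟨by positivity, ?_⟩
  simp only [Real.norm_eq_abs]
  nlinarith [sq_abs (f x), sq_abs (g x), mul_nonneg (abs_nonneg (f x)) (abs_nonneg (g x))]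

lemma energy_smoothModulus_le {ε : ℝ} (hf : IsTest f) (hg : IsTest g) (hε : 0 < ε) :
    energy α₁ α₂ (pdx fun p => smoothModulus ε (f p) (g p))
        (pdy fun p => smoothModulus ε (f p) (g p))
      ≤ energy α₁ α₂ (pdx f) (pdy f) + energy α₁ α₂ (pdx g) (pdy g) := by
  simpa using energy_le_add (a := 1) (b := 1) hf.hasFiniteEnergy hg.hasFiniteEnergy
    (fun p => by simpa [pdx] using sq_fderiv_smoothModulus_le hf hg hε p (1, 0))
    fun p => by simpa [pdy] using sq_fderiv_smoothModulus_le hf hg hε p (0, 1)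

-- For all `A ≤ E` at once this says `E(√(f² + g²)) ≤ E(f) + E(g)`: the energy is subadditive, hence
-- convex, as a function of the density `f²`.
lemma IsTest.le_energy_add_energy (hA : ∀ ψ, IsTest ψ → A ψ ≤ energy α₁ α₂ (pdx ψ) (pdy ψ))
    (hf : IsTest f) (hg : IsTest g)
    (hcont : DominatedContinuous (volume.restrict Omega) A fun p => √(f p ^ 2 + g p ^ 2)) :
    A (fun p => √(f p ^ 2 + g p ^ 2))
      ≤ energy α₁ α₂ (pdx f) (pdy f) + energy α₁ α₂ (pdx g) (pdy g) := by
  refine le_of_tendsto' (hcont (fun n p => smoothModulus (1 / ((n : ℝ) + 1)) (f p) (g p)) _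
    (fun n => ?_) (fun n => ?_) ?_) fun n => (hA _ (hf.comp_smoothModulus hg (by positivity))).trans
      (energy_smoothModulus_le hf hg (by positivity))
  · exact (hf.comp_smoothModulus hg (by positivity)).continuous.aestronglyMeasurable
  · refine ae_of_all _ fun p => ?_
    rw [abs_of_nonneg (Real.sqrt_nonneg _)]
    exact abs_smoothModulus_le (by positivity) _ _
  · exact ae_of_all _ fun p => tendsto_smoothModulus _ _

lemma MemH10.le_energy_add_energy (hA : ∀ ψ, IsTest ψ → A ψ ≤ energy α₁ α₂ (pdx ψ) (pdy ψ))
    (hcont : ∀ h, MemLp h r (volume.restrict Omega) →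
      DominatedContinuous (volume.restrict Omega) A h)
    (hu : MemH10 α₁ α₂ u gx gy) (hur : MemLp u r (volume.restrict Omega)) (hg : IsTest g) :
    A (fun p => √(u p ^ 2 + g p ^ 2)) ≤ energy α₁ α₂ gx gy + energy α₁ α₂ (pdx g) (pdy g) := by
  set A' : (ℝ × ℝ → ℝ) → ℝ := fun f =>
    A (fun p => √(f p ^ 2 + g p ^ 2)) - energy α₁ α₂ (pdx g) (pdy g)
  have hgr := hg.memLp r
  have hcont' (h : ℝ × ℝ → ℝ) (hh : MemLp h r (volume.restrict Omega)) :
      DominatedContinuous (volume.restrict Omega) A' h :=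
    ((hcont _ (memLp_sqrt_sq_add_sq hh hgr)).comp_sqrt_sq_add_sq hgr.1).sub
      fun _ _ _ _ _ => tendsto_const_nhds
  have hA' (ψ : ℝ × ℝ → ℝ) (hψ : IsTest ψ) : A' ψ ≤ energy α₁ α₂ (pdx ψ) (pdy ψ) :=
    sub_le_iff_le_add.mpr
      (hψ.le_energy_add_energy hA hg (hcont _ (memLp_sqrt_sq_add_sq (hψ.memLp r) hgr)))
  exact sub_le_iff_le_add.mp
    (hu.le_energy hA' (fun k => hcont' _ (memLp_const k)) (hcont' u hur))

end Approximation

section Eigenvalue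

variable {α₁ α₂ c a b : ℝ} {V u gx gy w hx hy : ℝ × ℝ → ℝ}

lemma a1Form_self (u gx gy : ℝ × ℝ → ℝ) : a1Form α₁ α₂ u gx gy u gx gy = energy α₁ α₂ gx gy := by
  simp only [a1Form, energy, energyDensity, ← sq]

lemma aForm_self (hu : MemH0 α₁ α₂ V u gx gy) :
    aForm α₁ α₂ V u gx gy u gx gy = energy α₁ α₂ gx gy + ∫ p in Omega, V p * u p ^ 2 := by
  rw [energy, ← integral_add hu.1.1.hasFiniteEnergy.integrable hu.2]
  simp only [aForm, energyDensity, mul_assoc (V _), ← sq]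

lemma aForm_self_nonneg (hV : 0 ≤ᵐ[volume.restrict Omega] V) (hu : MemH0 α₁ α₂ V u gx gy) :
    0 ≤ aForm α₁ α₂ V u gx gy u gx gy := by
  rw [aForm_self hu]
  refine add_nonneg (energy_nonneg _ _) (integral_nonneg_of_ae ?_)
  filter_upwards [hV] with p hp using mul_nonneg hp (sq_nonneg _)

lemma MemH0.const_mul (hu : MemH0 α₁ α₂ V u gx gy) (a : ℝ) :
    MemH0 α₁ α₂ V (fun p => a * u p) (fun p => a * gx p) fun p => a * gy p := by
  refine ⟨hu.1.const_mul a, ?_⟩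
  simp only [mul_pow, mul_left_comm _ (a ^ 2)]
  exact Integrable.const_mul hu.2 _

lemma MemH0.integrable_mul_mul (hVm : AEStronglyMeasurable V (volume.restrict Omega))
    (hV : 0 ≤ᵐ[volume.restrict Omega] V) (hu : MemH0 α₁ α₂ V u gx gy)
    (hw : MemH0 α₁ α₂ V w hx hy) :
    Integrable (fun p => V p * u p * w p) (volume.restrict Omega) := by
  refine Integrable.mono' (hu.2.add hw.2)
    ((hVm.mul hu.1.1.memL2.1).mul hw.1.1.memL2.1) ?_
  filter_upwards [hV] with p hp
  rw [Pi.add_apply, mul_assoc, norm_mul, Real.norm_of_nonneg hp, ← mul_add, Real.norm_eq_abs]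
  refine mul_le_mul_of_nonneg_left (abs_le.mpr ?_) hp
  constructor <;> nlinarith [sq_nonneg (u p + w p), sq_nonneg (u p - w p)]

lemma MemH0.add (hVm : AEStronglyMeasurable V (volume.restrict Omega))
    (hV : 0 ≤ᵐ[volume.restrict Omega] V) (hu : MemH0 α₁ α₂ V u gx gy)
    (hw : MemH0 α₁ α₂ V w hx hy) :
    MemH0 α₁ α₂ V (fun p => u p + w p) (fun p => gx p + hx p) fun p => gy p + hy p := by
  refine ⟨hu.1.add hw.1, ?_⟩
  have expanded :=
    (Integrable.add hu.2 ((hu.integrable_mul_mul hVm hV hw).const_mul 2)).add hw.2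
  refine expanded.congr (ae_of_all _ fun p => ?_)
  simp only [Pi.add_apply]
  ring

lemma MemH0.exists_integral_sq_eq_one (hu : MemH0 α₁ α₂ V u gx gy)
    (hpos : 0 < ∫ p in Omega, u p ^ 2) :
    ∃ w hx hy : ℝ × ℝ → ℝ, MemH0 α₁ α₂ V w hx hy ∧ (∫ p in Omega, w p ^ 2) = 1 ∧
      aForm α₁ α₂ V u gx gy u gx gy / (∫ p in Omega, u p ^ 2)
        = aForm α₁ α₂ V w hx hy w hx hy := by
  have scale : (√(∫ p in Omega, u p ^ 2))⁻¹ ^ 2 = (∫ p in Omega, u p ^ 2)⁻¹ := by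
    rw [inv_pow, Real.sq_sqrt hpos.le]
  refine ⟨_, _, _, hu.const_mul (√(∫ p in Omega, u p ^ 2))⁻¹, ?_, ?_⟩
  · simp only [mul_pow, integral_const_mul, scale, inv_mul_cancel₀ hpos.ne']
  · rw [aForm_self hu, aForm_self (hu.const_mul _), energy_const_mul]
    simp only [mul_pow, mul_left_comm (V _), integral_const_mul, scale]
    ring

lemma lam1_mul_integral_sq_le (hV : 0 ≤ᵐ[volume.restrict Omega] V)
    (hu : MemH0 α₁ α₂ V u gx gy) (hpos : 0 < ∫ p in Omega, u p ^ 2) :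
    lam1 α₁ α₂ V * (∫ p in Omega, u p ^ 2)
      ≤ energy α₁ α₂ gx gy + ∫ p in Omega, V p * u p ^ 2 := by
  rw [← aForm_self hu, ← le_div_iff₀ hpos]
  refine csInf_le ⟨0, ?_⟩ (hu.exists_integral_sq_eq_one hpos)
  rintro r ⟨w, hx, hy, hw, -, rfl⟩
  exact aForm_self_nonneg hV hw

-- Junk value: `lam1` is `sInf ∅ = 0` when every element of `H₀(Ω)` vanishes almost everywhere.
lemma le_lam1 (hu : MemH0 α₁ α₂ V u gx gy) (hpos : 0 < ∫ p in Omega, u p ^ 2)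
    (hc : ∀ w hx hy, MemH0 α₁ α₂ V w hx hy →
      c * ∫ p in Omega, w p ^ 2 ≤ energy α₁ α₂ hx hy + ∫ p in Omega, V p * w p ^ 2) :
    c ≤ lam1 α₁ α₂ V := by
  refine le_csInf ⟨_, hu.exists_integral_sq_eq_one hpos⟩ ?_
  rintro r ⟨w, hx, hy, hw, hw1, rfl⟩
  simpa [aForm_self hw, hw1] using hc _ _ _ hw

lemma integral_add_two_mul_add_sq_mul {α : Type*} [MeasurableSpace α] {μ : Measure α}
    {F G K : α → ℝ} (hF : Integrable F μ) (hG : Integrable G μ) (hK : Integrable K μ) (t : ℝ) :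
    ∫ x, (F x + 2 * t * G x + t ^ 2 * K x) ∂μ
      = ∫ x, F x ∂μ + 2 * t * ∫ x, G x ∂μ + t ^ 2 * ∫ x, K x ∂μ := by
  have hFG : Integrable (fun x => F x + 2 * t * G x) μ := hF.add (hG.const_mul _)
  rw [integral_add hFG (hK.const_mul _), integral_add hF (hG.const_mul _), integral_const_mul,
    integral_const_mul]

lemma energy_add_const_mul (hg : HasFiniteEnergy α₁ α₂ gx gy) (hh : HasFiniteEnergy α₁ α₂ hx hy)
    (u w : ℝ × ℝ → ℝ) (t : ℝ) :
    energy α₁ α₂ (fun p => gx p + t * hx p) (fun p => gy p + t * hy p)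
      = energy α₁ α₂ gx gy + 2 * t * a1Form α₁ α₂ u gx gy w hx hy
        + t ^ 2 * energy α₁ α₂ hx hy := by
  have cross := (hg.1.integrable_mul hh.1).add (hg.2.integrable_mul hh.2)
  refine Eq.trans ?_ (integral_add_two_mul_add_sq_mul hg.integrable cross hh.integrable t)
  rw [energy]
  congr 1 with p
  simp only [energyDensity, Pi.add_apply, Pi.mul_apply]
  ring

lemma integral_mul_add_const_mul_sq {α : Type*} [MeasurableSpace α] {μ : Measure α}
    {V u w : α → ℝ} (hu : Integrable (fun x => V x * u x ^ 2) μ)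
    (huw : Integrable (fun x => V x * u x * w x) μ) (hw : Integrable (fun x => V x * w x ^ 2) μ)
    (t : ℝ) :
    ∫ x, V x * (u x + t * w x) ^ 2 ∂μ
      = ∫ x, V x * u x ^ 2 ∂μ + 2 * t * ∫ x, V x * u x * w x ∂μ
        + t ^ 2 * ∫ x, V x * w x ^ 2 ∂μ := by
  rw [← integral_add_two_mul_add_sq_mul hu huw hw]
  congr 1 with x
  ring

lemma eq_zero_of_forall_nonneg_add_sq (h : ∀ t : ℝ, 0 ≤ 2 * t * b + t ^ 2 * a) : b = 0 := by
  have discrim_le : discrim a (2 * b) 0 ≤ 0 := discrim_le_zero fun t => by linarith [h t]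
  have sq_le : b ^ 2 ≤ 0 := by
    rw [discrim] at discrim_le
    linarith
  exact pow_eq_zero_iff two_ne_zero |>.mp (sq_le.antisymm (sq_nonneg b))

lemma MemH0.euler_lagrange (hVm : AEStronglyMeasurable V (volume.restrict Omega))
    (hV : 0 ≤ᵐ[volume.restrict Omega] V)
    (hc : ∀ w hx hy, MemH0 α₁ α₂ V w hx hy →
      c * ∫ p in Omega, w p ^ 2 ≤ energy α₁ α₂ hx hy + ∫ p in Omega, V p * w p ^ 2)
    (hu : MemH0 α₁ α₂ V u gx gy)
    (hu_eq : c * ∫ p in Omega, u p ^ 2 = energy α₁ α₂ gx gy + ∫ p in Omega, V p * u p ^ 2)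
    (hw : MemH0 α₁ α₂ V w hx hy) :
    a1Form α₁ α₂ u gx gy w hx hy + (∫ p in Omega, V p * u p * w p)
      = c * ∫ p in Omega, u p * w p := by
  refine sub_eq_zero.mp (eq_zero_of_forall_nonneg_add_sq (a := energy α₁ α₂ hx hy
    + (∫ p in Omega, V p * w p ^ 2) - c * ∫ p in Omega, w p ^ 2) fun t => ?_)
  have bound := hc _ _ _ (hu.add hVm hV (hw.const_mul t))
  have mass := integral_mul_add_const_mul_sq (V := fun _ => 1) (μ := volume.restrict Omega)
    (by simpa using hu.1.1.memL2.integrable_sq)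
    (by simpa using! hu.1.1.memL2.integrable_mul hw.1.1.memL2)
    (by simpa using hw.1.1.memL2.integrable_sq) t
  simp only [one_mul] at mass
  rw [energy_add_const_mul hu.1.1.hasFiniteEnergy hw.1.1.hasFiniteEnergy u w, mass,
    integral_mul_add_const_mul_sq hu.2 (hu.integrable_mul_mul hVm hV hw) hw.2] at bound
  linarith

end Eigenvalue

section OptimalPotential

variable {α₁ α₂ p q M : ℝ} {V u gx gy w hx hy : ℝ × ℝ → ℝ}

lemma MemU.not_sq_ae_eq_zero (hu : MemU α₁ α₂ q u gx gy) :
    ¬ (fun x => u x ^ 2) =ᵐ[volume.restrict Omega] 0 :=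
  fun h => hu.2.2 (h.mono fun _ => pow_eq_zero_iff two_ne_zero |>.mp)

lemma MemU.integral_sq_pos (hu : MemU α₁ α₂ q u gx gy) : 0 < ∫ x in Omega, u x ^ 2 :=
  integral_pos_of_not_ae_eq_zero (ae_sq_nonneg u) hu.1.1.memL2.integrable_sq hu.not_sq_ae_eq_zero

lemma MemU.lqNorm_sq_pos (hq : 0 < q) (hu : MemU α₁ α₂ q u gx gy) :
    0 < lqNorm (volume.restrict Omega) q fun x => u x ^ 2 :=
  lqNorm_pos hq (ae_sq_nonneg u) (memLp_sq hu.2.1) hu.not_sq_ae_eq_zero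

lemma MemH10.memH0_of_memLp (hpq : p.HolderConjugate q)
    (hV : MemLp V (ENNReal.ofReal p) (volume.restrict Omega)) (hu : MemH10 α₁ α₂ u gx gy)
    (huq : MemLp u (ENNReal.ofReal (2 * q)) (volume.restrict Omega)) : MemH0 α₁ α₂ V u gx gy :=
  ⟨hu, integrable_mul_of_holderConjugate hpq hV (memLp_sq huq)⟩

lemma MemU.Jfun_mul_integral_sq (hu : MemU α₁ α₂ q u gx gy) :
    Jfun α₁ α₂ M q u gx gy * ∫ x in Omega, u x ^ 2
      = energy α₁ α₂ gx gy + M * lqNorm (volume.restrict Omega) q fun x => u x ^ 2 := by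
  rw [Jfun, div_mul_cancel₀ _ hu.integral_sq_pos.ne', a1Form_self, lqNorm]
  simp only [abs_rpow_two_mul]

/-- The potential `V₀ = M ‖u²‖_q^{1-q} |u|^{2(q-1)}` built from `u`. -/
def optimalPotential (q M : ℝ) (u : ℝ × ℝ → ℝ) : ℝ × ℝ → ℝ :=
  dualPotential (volume.restrict Omega) q M fun x => u x ^ 2

lemma optimalPotential_eq (q M : ℝ) (u : ℝ × ℝ → ℝ) :
    optimalPotential q M u = fun x =>
      M * (∫ y in Omega, |u y| ^ (2 * q)) ^ ((1 - q) / q) * |u x| ^ (2 * (q - 1)) := by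
  funext x
  simp only [optimalPotential, dualPotential, lqNorm, abs_rpow_two_mul]
  rw [← Real.rpow_mul (integral_rpow_nonneg (ae_sq_nonneg u) q), one_div_mul_eq_div]

lemma optimalPotential_nonneg (hM : 0 ≤ M) (u : ℝ × ℝ → ℝ) :
    0 ≤ᵐ[volume.restrict Omega] optimalPotential q M u :=
  dualPotential_nonneg hM (ae_sq_nonneg u)

lemma MemU.eLpNorm_optimalPotential (hpq : p.HolderConjugate q) (hM : 0 ≤ M)
    (hu : MemU α₁ α₂ q u gx gy) :
    eLpNorm (optimalPotential q M u) (ENNReal.ofReal p) (volume.restrict Omega)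
      = ENNReal.ofReal M :=
  eLpNorm_dualPotential hpq hM (ae_sq_nonneg u) (memLp_sq hu.2.1) (hu.lqNorm_sq_pos hpq.symm.pos)

lemma MemU.memSp_optimalPotential (hpq : p.HolderConjugate q) (hM : 0 ≤ M)
    (hu : MemU α₁ α₂ q u gx gy) : MemSp p M (optimalPotential q M u) :=
  ⟨memLp_dualPotential hpq (ae_sq_nonneg u) (memLp_sq hu.2.1), optimalPotential_nonneg hM u,
    (hu.eLpNorm_optimalPotential hpq hM).le⟩

lemma MemU.integral_mul_sq_le (hpq : p.HolderConjugate q) (hM : 0 ≤ M)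
    (hu : MemU α₁ α₂ q u gx gy) (hV : MemSp p M V) :
    ∫ x in Omega, V x * u x ^ 2 ≤ M * lqNorm (volume.restrict Omega) q fun x => u x ^ 2 :=
  integral_mul_le_mul_lqNorm hpq hM hV.2.1 (ae_sq_nonneg u) hV.1 (memLp_sq hu.2.1) hV.2.2

lemma MemU.lam1_le_Jfun (hpq : p.HolderConjugate q) (hM : 0 ≤ M) (hu : MemU α₁ α₂ q u gx gy)
    (hV : MemSp p M V) : lam1 α₁ α₂ V ≤ Jfun α₁ α₂ M q u gx gy := by
  refine le_of_mul_le_mul_right ?_ hu.integral_sq_pos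
  calc lam1 α₁ α₂ V * ∫ x in Omega, u x ^ 2
      ≤ energy α₁ α₂ gx gy + ∫ x in Omega, V x * u x ^ 2 :=
        lam1_mul_integral_sq_le hV.2.1 (hu.1.memH0_of_memLp hpq hV.1 hu.2.1) hu.integral_sq_pos
    _ ≤ energy α₁ α₂ gx gy + M * lqNorm (volume.restrict Omega) q fun x => u x ^ 2 := by
        gcongr
        exact hu.integral_mul_sq_le hpq hM hV
    _ = Jfun α₁ α₂ M q u gx gy * ∫ x in Omega, u x ^ 2 := hu.Jfun_mul_integral_sq.symm

lemma MemU.ae_eq_optimalPotential (hpq : p.HolderConjugate q) (hM : 0 < M)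
    (hu : MemU α₁ α₂ q u gx gy) (hV : MemSp p M V)
    (h : lam1 α₁ α₂ V = Jfun α₁ α₂ M q u gx gy) :
    V =ᵐ[volume.restrict Omega] optimalPotential q M u := by
  have le_integral := lam1_mul_integral_sq_le hV.2.1 (hu.1.memH0_of_memLp hpq hV.1 hu.2.1)
    hu.integral_sq_pos
  rw [h, hu.Jfun_mul_integral_sq, add_le_add_iff_left] at le_integral
  exact ae_eq_dualPotential_of_integral_mul_eq hpq hM hV.2.1 (ae_sq_nonneg u) hV.1
    (memLp_sq hu.2.1) hV.2.2 (hu.lqNorm_sq_pos hpq.symm.pos)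
    ((hu.integral_mul_sq_le hpq hM.le hV).antisymm le_integral)

/-- `u`, with weak derivatives `gx, gy`, minimizes `J` over `U`. -/
def IsMinimizerJ (α₁ α₂ M q : ℝ) (u gx gy : ℝ × ℝ → ℝ) : Prop :=
  MemU α₁ α₂ q u gx gy ∧ ∀ w hx hy : ℝ × ℝ → ℝ, MemU α₁ α₂ q w hx hy →
    Jfun α₁ α₂ M q u gx gy ≤ Jfun α₁ α₂ M q w hx hy

namespace IsMinimizerJ

lemma rayleighGap_le (hM : 0 ≤ M) (hu : IsMinimizerJ α₁ α₂ M q u gx gy) (hw : IsTest w) :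
    rayleighGap (volume.restrict Omega) (Jfun α₁ α₂ M q u gx gy) M q w
      ≤ energy α₁ α₂ (pdx w) (pdy w) := by
  by_cases hne : w =ᵐ[volume.restrict Omega] 0
  · have mass_zero : ∫ x in Omega, w x ^ 2 = 0 :=
      integral_eq_zero_of_ae (by filter_upwards [hne] with x hx using by simp [hx])
    rw [rayleighGap, mass_zero, mul_zero, zero_sub]
    exact (neg_nonpos.mpr (mul_nonneg hM (lqNorm_nonneg (ae_sq_nonneg w)))).trans
      (energy_nonneg _ _)
  · have hwU : MemU α₁ α₂ q w (pdx w) (pdy w) := ⟨hw.memH10, hw.memLp _, hne⟩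
    rw [rayleighGap, sub_le_iff_le_add, ← hwU.Jfun_mul_integral_sq]
    exact mul_le_mul_of_nonneg_right (hu.2 _ _ _ hwU) hwU.integral_sq_pos.le

-- First-order condition for `u²`, a minimizer of the convex functional
-- `ρ ↦ E(√ρ) + M ‖ρ‖_q - J(u) ∫ ρ`, in the direction `w²`.
lemma mul_integral_sq_le_of_isTest (hpq : p.HolderConjugate q) (hM : 0 ≤ M)
    (hu : IsMinimizerJ α₁ α₂ M q u gx gy) (hw : IsTest w) :
    Jfun α₁ α₂ M q u gx gy * ∫ x in Omega, w x ^ 2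
      ≤ energy α₁ α₂ (pdx w) (pdy w) + ∫ x in Omega, optimalPotential q M u x * w x ^ 2 := by
  refine sub_le_iff_le_add'.mp (le_integral_dualPotential_mul hpq hM (ae_sq_nonneg u)
    (ae_sq_nonneg w) (memLp_sq hu.1.2.1) (memLp_sq (hw.memLp _))
    (hu.1.lqNorm_sq_pos hpq.symm.pos) fun s hs => ?_)
  have convexity := hu.1.1.le_energy_add_energy (fun ψ hψ => hu.rayleighGap_le hM hψ)
    (fun h hh => dominatedContinuous_rayleighGap hpq.symm.lt.le (memLp_sq hh)) hu.1.2.1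
    (hw.const_mul √s)
  rw [rayleighGap_sqrt_sq_add_sq hu.1.1.1.memL2 (hw.memLp 2) hs.le, hw.energy_pdx_pdy_const_mul,
    Real.sq_sqrt hs.le, mul_add, hu.1.Jfun_mul_integral_sq] at convexity
  linarith

lemma mul_integral_sq_le (hpq : p.HolderConjugate q) (hM : 0 ≤ M)
    (hu : IsMinimizerJ α₁ α₂ M q u gx gy)
    (hw : MemH0 α₁ α₂ (optimalPotential q M u) w hx hy) :
    Jfun α₁ α₂ M q u gx gy * ∫ x in Omega, w x ^ 2
      ≤ energy α₁ α₂ hx hy + ∫ x in Omega, optimalPotential q M u x * w x ^ 2 := by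
  have hV := (hu.1.memSp_optimalPotential hpq hM).1
  have hV_int : Integrable (optimalPotential q M u) (volume.restrict Omega) :=
    hV.integrable (by simpa using hpq.lt.le)
  have continuous (h : ℝ × ℝ → ℝ) (h_sq : Integrable (fun x => h x ^ 2) (volume.restrict Omega))
      (h_mul : Integrable (fun x => optimalPotential q M u x * h x ^ 2)
        (volume.restrict Omega)) :=
    ((dominatedContinuous_integral_sq h_sq).const_mul (Jfun α₁ α₂ M q u gx gy)).sub
      (dominatedContinuous_integral_mul_sq hV.1 h_mul)
  exact sub_le_iff_le_add.mp (hw.1.le_energy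
    (fun ψ hψ => sub_le_iff_le_add.mpr (hu.mul_integral_sq_le_of_isTest hpq hM hψ))
    (fun k => continuous _ (integrable_const _) (hV_int.mul_const _))
    (continuous w hw.1.1.memL2.integrable_sq hw.2))

lemma lam1_optimalPotential (hpq : p.HolderConjugate q) (hM : 0 ≤ M)
    (hu : IsMinimizerJ α₁ α₂ M q u gx gy) :
    lam1 α₁ α₂ (optimalPotential q M u) = Jfun α₁ α₂ M q u gx gy := by
  have hS := hu.1.memSp_optimalPotential hpq hM
  exact (hu.1.lam1_le_Jfun hpq hM hS).antisymm (le_lam1 (hu.1.1.memH0_of_memLp hpq hS.1 hu.1.2.1)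
    hu.1.integral_sq_pos fun w hx hy hw => hu.mul_integral_sq_le hpq hM hw)

lemma sSup_lam1 (hpq : p.HolderConjugate q) (hM : 0 ≤ M) (hu : IsMinimizerJ α₁ α₂ M q u gx gy) :
    sSup {r | ∃ V : ℝ × ℝ → ℝ, MemSp p M V ∧ r = lam1 α₁ α₂ V} = Jfun α₁ α₂ M q u gx gy := by
  refine IsGreatest.csSup_eq
    ⟨⟨_, hu.1.memSp_optimalPotential hpq hM, (hu.lam1_optimalPotential hpq hM).symm⟩, ?_⟩
  rintro r ⟨V, hV, rfl⟩
  exact hu.1.lam1_le_Jfun hpq hM hV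

lemma euler_lagrange (hpq : p.HolderConjugate q) (hM : 0 ≤ M)
    (hu : IsMinimizerJ α₁ α₂ M q u gx gy)
    (hw : MemH0 α₁ α₂ (optimalPotential q M u) w hx hy) :
    a1Form α₁ α₂ u gx gy w hx hy + (∫ x in Omega, optimalPotential q M u x * u x * w x)
      = lam1 α₁ α₂ (optimalPotential q M u) * ∫ x in Omega, u x * w x := by
  have hS := hu.1.memSp_optimalPotential hpq hM
  have norming : ∫ x in Omega, optimalPotential q M u x * u x ^ 2
      = M * lqNorm (volume.restrict Omega) q fun x => u x ^ 2 :=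
    integral_dualPotential_mul hpq.symm.pos (ae_sq_nonneg u) (hu.1.lqNorm_sq_pos hpq.symm.pos)
  rw [hu.lam1_optimalPotential hpq hM]
  refine MemH0.euler_lagrange hS.1.1 hS.2.1 (fun _ _ _ hv => hu.mul_integral_sq_le hpq hM hv)
    (hu.1.1.memH0_of_memLp hpq hS.1 hu.1.2.1) ?_ hw
  rw [hu.1.Jfun_mul_integral_sq, norming]

end IsMinimizerJ

end OptimalPotential

theorem optimal_potential_first_eigenvalue_general (α₁ α₂ ppow qe M : ℝ)
    (hp : 1 < ppow) (hq : qe = ppow / (ppow - 1)) (hM : 0 < M)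
    (u₀ g₀x g₀y : ℝ × ℝ → ℝ) (hmemU : MemU α₁ α₂ qe u₀ g₀x g₀y)
    (hmin : ∀ u gx gy : ℝ × ℝ → ℝ, MemU α₁ α₂ qe u gx gy →
      Jfun α₁ α₂ M qe u₀ g₀x g₀y ≤ Jfun α₁ α₂ M qe u gx gy) :
    ∀ V₀ : ℝ × ℝ → ℝ,
      (V₀ = fun p : ℝ × ℝ =>
        M * (∫ q in Omega, |u₀ q| ^ (2 * qe)) ^ ((1 - qe) / qe) *
          |u₀ p| ^ (2 * (qe - 1))) →
      MemSp ppow M V₀ ∧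
      eLpNorm V₀ (ENNReal.ofReal ppow) (volume.restrict Omega) = ENNReal.ofReal M ∧
      (∀ w wx wy : ℝ × ℝ → ℝ, MemH10 α₁ α₂ w wx wy →
        MemLp w (ENNReal.ofReal (2 * qe)) (volume.restrict Omega) →
        a1Form α₁ α₂ u₀ g₀x g₀y w wx wy + (∫ p in Omega, V₀ p * u₀ p * w p) =
          lam1 α₁ α₂ V₀ * ∫ p in Omega, u₀ p * w p) ∧
      lam1 α₁ α₂ V₀ = Jfun α₁ α₂ M qe u₀ g₀x g₀y ∧
      lam1 α₁ α₂ V₀ = sSup { r | ∃ V : ℝ × ℝ → ℝ, MemSp ppow M V ∧ r = lam1 α₁ α₂ V } ∧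
      (∀ V : ℝ × ℝ → ℝ, MemSp ppow M V →
        lam1 α₁ α₂ V = sSup { r | ∃ W : ℝ × ℝ → ℝ, MemSp ppow M W ∧ r = lam1 α₁ α₂ W } →
        (∀ᵐ p ∂(volume.restrict Omega), V p = V₀ p)) := by
  intro V₀ hV₀
  obtain rfl : V₀ = optimalPotential qe M u₀ := hV₀.trans (optimalPotential_eq qe M u₀).symm
  have hpq : ppow.HolderConjugate qe := (Real.holderConjugate_iff_eq_conjExponent hp).mpr hq
  have hu : IsMinimizerJ α₁ α₂ M qe u₀ g₀x g₀y := ⟨hmemU, hmin⟩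
  have hS := hmemU.memSp_optimalPotential hpq hM.le
  have lam1_eq := hu.lam1_optimalPotential hpq hM.le
  have sSup_eq := hu.sSup_lam1 hpq hM.le
  exact ⟨hS, hmemU.eLpNorm_optimalPotential hpq hM.le,
    fun w wx wy hw hwq => hu.euler_lagrange hpq hM.le (hw.memH0_of_memLp hpq hS.1 hwq),
    lam1_eq, lam1_eq.trans sSup_eq.symm,
    fun V hV h => hmemU.ae_eq_optimalPotential hpq hM hV (h.trans sSup_eq)⟩

/-- Optimal potential for the first eigenvalue: with
`V₀ = M ‖u₀²‖_{L^q}^{1−q} |u₀|^{2(q−1)}` built from a nonnegative minimizer `u₀` of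
`J`, one has `V₀ ∈ S_p` with `‖V₀‖_{L^p} = M`; `u₀` is a first eigenfunction for
`V₀`; `λ₁(V₀) = J(u₀) = sup { λ₁(V) : V ∈ S_p }`; and `V₀` is the unique maximizer
(up to a.e. equality). -/
theorem optimal_potential_first_eigenvalue (α₁ α₂ ppow qe M : ℝ)
    (hα₁ : α₁ ∈ Ioo (0:ℝ) (1/2)) (hα₂ : α₂ ∈ Ioo (0:ℝ) (1/2))
    (hp : 1 < ppow) (hq : qe = ppow / (ppow - 1)) (hM : 0 < M)
    (u₀ g₀x g₀y : ℝ × ℝ → ℝ) (hmemU : MemU α₁ α₂ qe u₀ g₀x g₀y)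
    (hpos : ∀ᵐ p ∂(volume.restrict Omega), 0 ≤ u₀ p)
    (hmin : ∀ u gx gy : ℝ × ℝ → ℝ, MemU α₁ α₂ qe u gx gy →
      Jfun α₁ α₂ M qe u₀ g₀x g₀y ≤ Jfun α₁ α₂ M qe u gx gy) :
    ∀ V₀ : ℝ × ℝ → ℝ,
      (V₀ = fun p : ℝ × ℝ =>
        M * (∫ q in Omega, |u₀ q| ^ (2 * qe)) ^ ((1 - qe) / qe) *
          |u₀ p| ^ (2 * (qe - 1))) →
      MemSp ppow M V₀ ∧
      eLpNorm V₀ (ENNReal.ofReal ppow) (volume.restrict Omega) = ENNReal.ofReal M ∧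
      (∀ w wx wy : ℝ × ℝ → ℝ, MemH10 α₁ α₂ w wx wy →
        MemLp w (ENNReal.ofReal (2 * qe)) (volume.restrict Omega) →
        a1Form α₁ α₂ u₀ g₀x g₀y w wx wy + (∫ p in Omega, V₀ p * u₀ p * w p) =
          lam1 α₁ α₂ V₀ * ∫ p in Omega, u₀ p * w p) ∧
      lam1 α₁ α₂ V₀ = Jfun α₁ α₂ M qe u₀ g₀x g₀y ∧
      lam1 α₁ α₂ V₀ = sSup { r | ∃ V : ℝ × ℝ → ℝ, MemSp ppow M V ∧ r = lam1 α₁ α₂ V } ∧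
      (∀ V : ℝ × ℝ → ℝ, MemSp ppow M V →
        lam1 α₁ α₂ V = sSup { r | ∃ W : ℝ × ℝ → ℝ, MemSp ppow M W ∧ r = lam1 α₁ α₂ W } →
        (∀ᵐ p ∂(volume.restrict Omega), V p = V₀ p)) :=
  optimal_potential_first_eigenvalue_general α₁ α₂ ppow qe M hp hq hM u₀ g₀x g₀y hmemU hmin
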